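/- arXiv:2104.11836 — 3 statements merged into one kernel-verified Lean document; each statement's English description precedes it below -/
import Mathlib

section
/- (O'Carroll) Let (A,m) be a local ring with infinite residue field, let I_1,…,I_s be ideals of A and set I = I_1·I_2⋯I_s, and let i and p be positive integers such that I^i is finitely generated and v(I^i) < C(i+p, i). Then there exist elements h_1,…,h_p, each of the form h_t = l_{t,1}·l_{t,2}⋯l_{t,s} with l_{t,j} ∈ I_j, such that I^i = (h_1,…,h_p)·I^{i−1}. -/
/-!
Write `ℓ_Q(X)` for the length of `(X + Q) / Q`. By induction on `d` and `p`, for every ideal `Q`,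
`ℓ_Q(I ^ d) < C(d + p, d)` yields `p` products `h_t` with `I ^ d ⊆ Q + (h_1, …, h_p) I ^ (d - 1)`.
For a product `h` of elements of the `I_j`, multiplication by `h` gives
`ℓ_Q(I ^ (d + 1)) = ℓ_{Q : h}(I ^ d) + ℓ_{Q + h I ^ d}(I ^ (d + 1))`, and Pascal's rule splits the
bound in the same way. If for some `h` the second term is below its share, use `h` as one of the
products and lower `p`. Otherwise the induction on `d` applies modulo `Q : h` for every `h`.
Finitely many `h` suffice to generate `I ^ (d + 1)` modulo `Q`, and one choice of products works for
all of these: along a line joining two choices, Nakayama's lemma over `A[X]` shows that each of the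
conditions persists outside finitely many residue classes of the parameter, and the residue field
is infinite. The theorem is the case `Q = m I ^ i`, by Nakayama's lemma over `A`.
-/

namespace OCarroll

open Filter Polynomial

section RelativeLength

variable {R M N : Type*} [CommRing R] [AddCommGroup M] [Module R M] [AddCommGroup N] [Module R N]

/-- The length of `(X + Q) / Q`, the image of the submodule `X` in `M ⧸ Q`. -/
noncomputable def relLength (Q X : Submodule R M) : ℕ∞ :=
  Module.length R (X.map Q.mkQ)

theorem map_mkQ_le_map_mkQ_iff {Q X Y : Submodule R M} :
    X.map Q.mkQ ≤ Y.map Q.mkQ ↔ X ≤ Q ⊔ Y := by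
  rw [Submodule.map_le_iff_le_comap, Submodule.comap_map_mkQ]

theorem le_of_relLength_lt_one {Q X : Submodule R M} (h : relLength Q X < 1) : X ≤ Q := by
  rw [Order.lt_one_iff, relLength, Module.length_eq_zero_iff, Submodule.subsingleton_iff_eq_bot,
    ← Submodule.map_bot Q.mkQ] at h
  simpa only [sup_bot_eq] using map_mkQ_le_map_mkQ_iff.mp h.le

theorem fg_map_mkQ_of_relLength_ne_top {Q X : Submodule R M} (h : relLength Q X ≠ ⊤) :
    (X.map Q.mkQ).FG := by
  have := (isFiniteLength_iff_isNoetherian_isArtinian.mp (Module.length_ne_top_iff.mp h)).1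
  exact Module.Finite.iff_fg.mp inferInstance

theorem relLength_eq_add_of_le (Q : Submodule R M) {X Y : Submodule R M} (hYX : Y ≤ X) :
    relLength Q X = relLength Q Y + relLength (Q ⊔ Y) X := by
  let π : M ⧸ Q →ₗ[R] M ⧸ Q ⊔ Y := Submodule.factor le_sup_left
  have ker_π : π.ker = Y.map Q.mkQ := by
    simp only [π, Submodule.factor, Submodule.ker_mapQ, Submodule.comap_id, Submodule.map_sup,
      Submodule.mkQ_map_self, bot_sup_eq]
  have map_π : X.map (Q ⊔ Y).mkQ = (X.map Q.mkQ).map π := by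
    rw [← Submodule.map_comp, Submodule.factor_comp_mk]
  rw [relLength, relLength, relLength, map_π]
  refine Module.length_eq_add_of_exact (Submodule.inclusion (Submodule.map_mono hYX))
    (π.submoduleMap _) (Submodule.inclusion_injective _) (π.submoduleMap_surjective _) ?_
  rw [LinearMap.exact_iff, Submodule.range_inclusion, ← ker_π]
  ext x
  simp only [LinearMap.mem_ker, Submodule.mem_comap, Submodule.subtype_apply, Subtype.ext_iff,
    LinearMap.submoduleMap_coe_apply, Submodule.coe_zero]

theorem relLength_map (f : M →ₗ[R] N) (Q : Submodule R N) (X : Submodule R M) :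
    relLength Q (X.map f) = relLength (Q.comap f) X := by
  let f' : M ⧸ Q.comap f →ₗ[R] N ⧸ Q := Submodule.mapQ _ Q f le_rfl
  have injective_f' : Function.Injective f' := by
    rw [← LinearMap.ker_eq_bot, Submodule.ker_mapQ, Submodule.mkQ_map_self]
  have map_f' : (X.map (Q.comap f).mkQ).map f' = (X.map f).map Q.mkQ := by
    rw [← Submodule.map_comp, ← Submodule.map_comp, Submodule.mapQ_mkQ]
  rw [relLength, relLength, ← map_f']
  exact (Submodule.equivMapOfInjective f' injective_f' _).length_eq.symm

theorem relLength_span_singleton_mul (Q Y : Ideal R) (h : R) :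
    relLength Q (Ideal.span {h} * Y) = relLength (Submodule.colon Q {h}) Y := by
  have map_mulLeft : Submodule.map (LinearMap.mulLeft R h) Y = Ideal.span {h} * Y := by
    ext x
    simp [Ideal.mem_span_singleton_mul]
  have comap_mulLeft : Submodule.comap (LinearMap.mulLeft R h) Q = Submodule.colon Q {h} := by
    ext x
    simp [Submodule.mem_colon_singleton, mul_comm]
  rw [← map_mulLeft, relLength_map, comap_mulLeft]

theorem length_le_card_of_isTorsionBySet {κ : Type*} [Fintype κ] {m : Ideal R} [m.IsMaximal]
    (hM : Module.IsTorsionBySet R M m) {v : κ → M}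
    (hv : Submodule.span R (Set.range v) = ⊤) : Module.length R M ≤ Fintype.card κ := by
  let := Ideal.Quotient.field m
  let := hM.module
  have : IsScalarTower R (R ⧸ m) M := hM.isScalarTower
  have span_eq_top : Submodule.span (R ⧸ m) (Set.range v) = ⊤ := by
    rw [← Submodule.restrictScalars_eq_top_iff R,
      Submodule.restrictScalars_span R (R ⧸ m) Ideal.Quotient.mk_surjective, hv]
  have : Module.Finite (R ⧸ m) M := ⟨⟨(Set.finite_range v).toFinset, by simpa using span_eq_top⟩⟩
  rw [Module.length_eq_of_surjective (R := R ⧸ m) Ideal.Quotient.mk_surjective,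
    Module.length_eq_finrank, Nat.cast_le, ← finrank_top, ← span_eq_top]
  exact finrank_range_le_card v

theorem relLength_smul_span_le_card (m : Ideal R) [m.IsMaximal] (G : Finset M) :
    relLength (m • Submodule.span R (G : Set M)) (Submodule.span R G) ≤ G.card := by
  set X := Submodule.span R (G : Set M)
  set Q := m • X
  have isTorsion : Module.IsTorsionBySet R (X.map Q.mkQ) m := by
    rintro ⟨_, x, hx, rfl⟩ ⟨a, ha⟩
    exact Subtype.ext ((Submodule.Quotient.mk_eq_zero Q).mpr (Submodule.smul_mem_smul ha hx))
  have mem_map (g : G) : Q.mkQ g ∈ X.map Q.mkQ :=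
    Submodule.mem_map_of_mem (Submodule.subset_span g.2)
  rw [relLength, ← Fintype.card_coe]
  refine length_le_card_of_isTorsionBySet isTorsion (v := fun g => ⟨Q.mkQ g, mem_map g⟩) ?_
  rw [Submodule.span_range_subtype_eq_top_iff, Submodule.map_span]
  congr 1
  ext y
  simp

theorem exists_finset_le_sup_iSup {κ : Type*} {Q X : Submodule R M} (hX : (X.map Q.mkQ).FG)
    {Y : κ → Submodule R M} (h : X ≤ Q ⊔ ⨆ k, Y k) :
    ∃ S : Finset κ, X ≤ Q ⊔ ⨆ k ∈ S, Y k := by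
  rw [← map_mkQ_le_map_mkQ_iff, Submodule.map_iSup] at h
  obtain ⟨S, hS⟩ := CompleteLattice.IsCompactElement.exists_finset_of_le_iSup _
    ((Submodule.fg_iff_compact _).mp hX) _ h
  exact ⟨S, map_mkQ_le_map_mkQ_iff.mp (by simpa only [Submodule.map_iSup] using hS)⟩

theorem exists_fg_le_and_le_sup {Q X : Submodule R M} (hX : (X.map Q.mkQ).FG) :
    ∃ Y ≤ X, Y.FG ∧ X ≤ Q ⊔ Y := by
  have le_iSup_span : X ≤ Q ⊔ ⨆ x : X, Submodule.span R {(x : M)} := fun x hx =>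
    Submodule.mem_sup_right
      (Submodule.mem_iSup_of_mem (⟨x, hx⟩ : X) (Submodule.mem_span_singleton_self x))
  obtain ⟨S, hS⟩ := exists_finset_le_sup_iSup hX le_iSup_span
  refine ⟨_, ?_, Submodule.fg_biSup S _ fun x _ => Submodule.fg_span_singleton (x : M), hS⟩
  exact iSup₂_le fun x _ => (Submodule.span_singleton_le_iff_mem _ _).mpr x.2

end RelativeLength

section PolynomialFamilies

variable {R : Type*} [CommRing R]

theorem sub_C_eval_mem_span_X_sub_C_mul {Y : Ideal R} {n : R[X]} (hn : n ∈ Y.map C) (a : R) :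
    n - C (n.eval a) ∈ Ideal.span {X - C a} * Y.map C := by
  induction hn using Submodule.span_induction with
  | mem n hn =>
    obtain ⟨y, -, rfl⟩ := hn
    simp
  | zero => simp
  | add n n' _ _ ih ih' =>
    rw [eval_add, C_add, add_sub_add_comm]
    exact add_mem ih ih'
  | smul q n hn ih =>
    have hq : q - C (q.eval a) ∈ Ideal.span {X - C a} :=
      Ideal.mem_span_singleton.mpr X_sub_C_dvd_sub_C_eval
    have split : q • n - C ((q • n).eval a) =
        (q - C (q.eval a)) * n + C (q.eval a) * (n - C (n.eval a)) := by
      rw [smul_eq_mul, eval_mul, C_mul]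
      ring
    rw [split]
    exact add_mem (Ideal.mul_mem_mul hq hn) (Ideal.mul_mem_left _ _ ih)

theorem map_C_map_evalRingHom_le {Y : Ideal R} {N : Ideal R[X]} (hN : N ≤ Y.map C) (a : R) :
    (N.map (evalRingHom a)).map C ≤ N ⊔ Ideal.span {X - C a} * Y.map C := by
  rw [Ideal.map_map, Ideal.map_le_iff_le_comap]
  intro n hn
  have := sub_mem (Submodule.mem_sup_left hn)
    (Submodule.mem_sup_right (sub_C_eval_mem_span_X_sub_C_mul (hN hn) a))
  rwa [sub_sub_cancel] at this

theorem map_evalRingHom_map_C (Q : Ideal R) (a : R) : (Q.map C).map (evalRingHom a) = Q := by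
  have eval_comp_C : (evalRingHom a).comp C = RingHom.id R := by
    ext
    simp
  rw [Ideal.map_map, eval_comp_C, Ideal.map_id]

theorem map_C_le_sup_span_X_sub_C_mul {Q Y Y₀ : Ideal R} (hYY₀ : Y ≤ Q ⊔ Y₀) {N : Ideal R[X]}
    (hN : N ≤ Y.map C) {a : R} (ha : Y ≤ Q ⊔ N.map (evalRingHom a)) :
    Y.map C ≤ (Q.map C ⊔ N) ⊔ Ideal.span {X - C a} * Y₀.map C := by
  set K : Ideal R[X] := Ideal.span {X - C a}
  have mul_le : K * Y.map C ≤ Q.map C ⊔ K * Y₀.map C := calc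
    K * Y.map C ≤ K * (Q ⊔ Y₀).map C := Ideal.mul_mono_right (Ideal.map_mono hYY₀)
    _ = K * Q.map C ⊔ K * Y₀.map C := by rw [Ideal.map_sup, Ideal.mul_sup]
    _ ≤ Q.map C ⊔ K * Y₀.map C := sup_le_sup_right Ideal.mul_le_right _
  calc Y.map C
      ≤ (Q ⊔ N.map (evalRingHom a)).map C := Ideal.map_mono ha
    _ = Q.map C ⊔ (N.map (evalRingHom a)).map C := Ideal.map_sup ..
    _ ≤ Q.map C ⊔ (N ⊔ (Q.map C ⊔ K * Y₀.map C)) :=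
      sup_le_sup_left ((map_C_map_evalRingHom_le hN a).trans (sup_le_sup_left mul_le _)) _
    _ = (Q.map C ⊔ N) ⊔ K * Y₀.map C := by
      rw [← sup_assoc, ← sup_assoc, sup_right_comm (Q.map C), sup_idem]

-- Nakayama's lemma over `R[X]` with respect to the ideal `(X - a)` produces `f`.
theorem exists_eval_eq_one_and_forall_mul_le {Q Y : Ideal R} (hY : (Submodule.map Q.mkQ Y).FG)
    {N : Ideal R[X]} (hN : N ≤ Y.map C) {a : R} (ha : Y ≤ Q ⊔ N.map (evalRingHom a)) :
    ∃ f : R[X], f.eval a = 1 ∧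
      ∀ τ, Ideal.span {f.eval τ} * Y ≤ Q ⊔ N.map (evalRingHom τ) := by
  obtain ⟨Y₀, hY₀Y, hY₀fg, hYY₀⟩ := exists_fg_le_and_le_sup hY
  obtain ⟨f, hf, hfY⟩ := Submodule.exists_sub_one_mem_and_smul_le_of_fg_of_le_sup
    (Ideal.FG.map hY₀fg C) (Ideal.map_mono hY₀Y) (map_C_le_sup_span_X_sub_C_mul hYY₀ hN ha)
  refine ⟨f, ?_, fun τ => Ideal.span_singleton_mul_le_iff.mpr fun y hy => ?_⟩
  · rw [Ideal.mem_span_singleton, dvd_iff_isRoot, IsRoot.def, eval_sub, eval_one] at hf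
    exact sub_eq_zero.mp hf
  · have mul_mem : f * C y ∈ Q.map C ⊔ N :=
      hfY (Submodule.smul_mem_pointwise_smul (C y) f _ (Ideal.mem_map_of_mem C hy))
    have := Ideal.mem_map_of_mem (evalRingHom τ) mul_mem
    rwa [Ideal.map_sup, map_evalRingHom_map_C, map_mul, coe_evalRingHom, eval_C] at this

end PolynomialFamilies

section Generic

variable {A : Type*} [CommRing A] [IsLocalRing A]

variable (A) in
/-- The filter on a local ring along which a property of `τ : A` holds eventually when it holds
for all `τ` outside finitely many residue classes modulo the maximal ideal. -/
noncomputable def cofiniteResidue : Filter A :=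
  comap (IsLocalRing.residue A) cofinite

instance [Infinite (IsLocalRing.ResidueField A)] : (cofiniteResidue A).NeBot :=
  cofinite_neBot.comap_of_surj IsLocalRing.residue_surjective

theorem eventually_isUnit_eval {f : A[X]} {a : A} (ha : IsUnit (f.eval a)) :
    ∀ᶠ τ in cofiniteResidue A, IsUnit (f.eval τ) := by
  have map_ne_zero : f.map (IsLocalRing.residue A) ≠ 0 := fun h => by
    rw [← IsLocalRing.residue_ne_zero_iff_isUnit, ← eval_map_apply, h, eval_zero] at ha
    exact ha rfl
  filter_upwards [tendsto_comap.eventually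
    (finite_setOfPred_isRoot map_ne_zero).eventually_cofinite_notMem] with τ hτ
  rwa [IsRoot.def, eval_map_apply, ← ne_eq,
    IsLocalRing.residue_ne_zero_iff_isUnit] at hτ

theorem eventually_le_sup_map_evalRingHom {Q Y : Ideal A} (hY : (Submodule.map Q.mkQ Y).FG)
    {N : Ideal A[X]} (hN : N ≤ Y.map C) {a : A} (ha : Y ≤ Q ⊔ N.map (evalRingHom a)) :
    ∀ᶠ τ in cofiniteResidue A, Y ≤ Q ⊔ N.map (evalRingHom τ) := by
  obtain ⟨f, hfa, hf⟩ := exists_eval_eq_one_and_forall_mul_le hY hN ha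
  filter_upwards [eventually_isUnit_eval (hfa ▸ isUnit_one : IsUnit (f.eval a))] with τ hτ
  simpa only [Ideal.span_singleton_eq_top.mpr hτ, Ideal.top_mul] using hf τ

end Generic

section CompleteReductions

variable {R S : Type*} [CommRing R] [CommRing S] {ι κ : Type*} [Fintype ι]

/-- The ideal generated by the products `h_t = ∏ j, l t j`. -/
def productsIdeal (l : κ → ι → R) : Ideal R :=
  Ideal.span (Set.range fun t => ∏ j, l t j)

theorem map_productsIdeal (φ : R →+* S) (l : κ → ι → R) :
    (productsIdeal l).map φ = productsIdeal fun t j => φ (l t j) := by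
  simp only [productsIdeal, Ideal.map_span, ← Set.range_comp, Function.comp_def, map_prod]

theorem productsIdeal_cons {p : ℕ} (m : ι → R) (l : Fin p → ι → R) :
    productsIdeal (Fin.cons m l : Fin (p + 1) → ι → R) =
      Ideal.span {∏ j, m j} ⊔ productsIdeal l := by
  have cons_prod : (fun t => ∏ j, (Fin.cons m l : Fin (p + 1) → ι → R) t j) =
      Fin.cons (∏ j, m j) fun t => ∏ j, l t j := by
    ext t
    cases t using Fin.cases <;> rfl
  rw [productsIdeal, cons_prod, Fin.range_cons, Ideal.span_insert, productsIdeal]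

theorem productsIdeal_le_prod {J : ι → Ideal R} {l : κ → ι → R} (hl : ∀ t j, l t j ∈ J j) :
    productsIdeal l ≤ ∏ j, J j := by
  rw [productsIdeal, Ideal.span_le, Set.range_subset_iff]
  exact fun t => Ideal.prod_mem_prod fun j _ => hl t j

theorem prod_eq_iSup_span_singleton (J : ι → Ideal R) :
    ∏ j, J j = ⨆ m : ∀ j, J j, Ideal.span {∏ j, (m j : R)} := by
  apply le_antisymm
  · conv_lhs => enter [2, j]; rw [← Ideal.span_eq (J j)]
    rw [Ideal.prod_span, Ideal.span_le]
    intro x hx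
    obtain ⟨m, hm, rfl⟩ := Set.mem_finsetProd .. |>.mp hx
    exact Ideal.mem_iSup_of_mem (fun j => ⟨m j, hm (Finset.mem_univ j)⟩)
      (Ideal.mem_span_singleton_self _)
  · refine iSup_le fun m => (Ideal.span_singleton_le_iff_mem _).mpr ?_
    exact Ideal.prod_mem_prod fun j _ => (m j).2

theorem mul_pow_sub_one_le (I : Ideal R) (d : ℕ) : I * I ^ (d - 1) ≤ I ^ d := by
  cases d with
  | zero => simp
  | succ d => exact (pow_succ' I d).ge

/-- The rows `l t` choose elements of the ideals `J j` whose products `h_t = ∏ j, l t j` satisfy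
`I ^ d ⊆ Q + (h_t)_t I ^ (d - 1)`, where `I = ∏ j, J j`. Subtraction is truncated, so for `d = 0`
the last factor is the unit ideal. -/
structure IsCompleteReductionMod (J : ι → Ideal R) (Q : Ideal R) (d : ℕ) (l : κ → ι → R) :
    Prop where
  mem : ∀ t j, l t j ∈ J j
  pow_le : (∏ j, J j) ^ d ≤ Q ⊔ productsIdeal l * (∏ j, J j) ^ (d - 1)

namespace IsCompleteReductionMod

variable {J : ι → Ideal R} {Q : Ideal R} {d : ℕ}

protected theorem zero (h : (∏ j, J j) ^ d ≤ Q) :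
    IsCompleteReductionMod J Q d (0 : κ → ι → R) where
  mem _ j := (J j).zero_mem
  pow_le := h.trans le_sup_left

protected theorem cons {p : ℕ} {m : ι → R} (hm : ∀ j, m j ∈ J j) {l : Fin p → ι → R}
    (h : IsCompleteReductionMod J (Q ⊔ Ideal.span {∏ j, m j} * (∏ j, J j) ^ d) (d + 1) l) :
    IsCompleteReductionMod J Q (d + 1) (Fin.cons m l : Fin (p + 1) → ι → R) where
  mem := Fin.cases hm h.mem
  pow_le := by
    rw [productsIdeal_cons, Ideal.sup_mul, ← sup_assoc, add_tsub_cancel_right]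
    exact h.pow_le

theorem span_singleton_mul_pow_le {l : κ → ι → R} {h : R} (hh : h ∈ ∏ j, J j)
    (hl : IsCompleteReductionMod J (Submodule.colon Q {h}) d l) :
    Ideal.span {h} * (∏ j, J j) ^ d ≤ Q ⊔ productsIdeal l * (∏ j, J j) ^ d := by
  set I := ∏ j, J j
  have mul_colon_le : Ideal.span {h} * Submodule.colon Q {h} ≤ Q :=
    Ideal.span_singleton_mul_le_iff.mpr fun x hx => by
      simpa only [smul_eq_mul, mul_comm] using Submodule.mem_colon_singleton.mp hx
  have mul_pow_le : Ideal.span {h} * I ^ (d - 1) ≤ I ^ d :=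
    (Ideal.mul_mono_left ((Ideal.span_singleton_le_iff_mem _).mpr hh)).trans
      (mul_pow_sub_one_le I d)
  calc Ideal.span {h} * I ^ d
      ≤ Ideal.span {h} * (Submodule.colon Q {h} ⊔ productsIdeal l * I ^ (d - 1)) :=
        Ideal.mul_mono_right hl.pow_le
    _ = Ideal.span {h} * Submodule.colon Q {h} ⊔
          productsIdeal l * (Ideal.span {h} * I ^ (d - 1)) := by
        rw [Ideal.mul_sup, mul_left_comm]
    _ ≤ Q ⊔ productsIdeal l * I ^ d := sup_le_sup mul_colon_le (Ideal.mul_mono_right mul_pow_le)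

end IsCompleteReductionMod

theorem exists_finset_pow_succ_le_sup_iSup {J : ι → Ideal R} {Q : Ideal R} {d : ℕ}
    (hfg : (Submodule.map Q.mkQ ((∏ j, J j) ^ (d + 1))).FG) :
    ∃ S : Finset (∀ j, J j), (∏ j, J j) ^ (d + 1) ≤
      Q ⊔ ⨆ m ∈ S, Ideal.span {∏ j, (m j : R)} * (∏ j, J j) ^ d := by
  refine exists_finset_le_sup_iSup hfg (le_sup_of_le_right ?_)
  rw [← Ideal.iSup_mul, ← prod_eq_iSup_span_singleton, pow_succ']

theorem relLength_pow_succ (Q I : Ideal R) {h : R} (hh : h ∈ I) (d : ℕ) :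
    relLength Q (I ^ (d + 1)) = relLength (Submodule.colon Q {h}) (I ^ d) +
      relLength (Q ⊔ Ideal.span {h} * I ^ d) (I ^ (d + 1)) := by
  have mul_le : Ideal.span {h} * I ^ d ≤ I ^ (d + 1) := by
    rw [pow_succ']
    exact Ideal.mul_mono_left ((Ideal.span_singleton_le_iff_mem _).mpr hh)
  rw [← relLength_span_singleton_mul, ← relLength_eq_add_of_le Q mul_le]

theorem relLength_colon_lt_or_relLength_sup_lt {Q I : Ideal R} {d p : ℕ}
    (hQ : relLength Q (I ^ (d + 1)) < ((d + 1 + (p + 1)).choose (d + 1) : ℕ)) {h : R}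
    (hh : h ∈ I) :
    relLength (Submodule.colon Q {h}) (I ^ d) < ((d + (p + 1)).choose d : ℕ) ∨
      relLength (Q ⊔ Ideal.span {h} * I ^ d) (I ^ (d + 1)) < ((d + 1 + p).choose (d + 1) : ℕ) := by
  have pascal : (d + 1 + (p + 1)).choose (d + 1) =
      (d + (p + 1)).choose d + (d + 1 + p).choose (d + 1) := by
    rw [← add_assoc, Nat.choose_succ_succ, Nat.add_right_comm d 1 p, add_assoc]
  rw [relLength_pow_succ Q I hh, pascal, Nat.cast_add] at hQ
  exact lt_or_lt_of_add_lt_add hQ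

end CompleteReductions

section LocalRing

variable {A : Type*} [CommRing A] [IsLocalRing A] {ι κ : Type*} [Fintype ι] {J : ι → Ideal A}
  {d : ℕ}

theorem IsCompleteReductionMod.eventually_eval {Q : Ideal A}
    (hfg : (Submodule.map Q.mkQ ((∏ j, J j) ^ d)).FG) {L : κ → ι → A[X]}
    (hL : ∀ t j, L t j ∈ (J j).map C) {a : A}
    (ha : IsCompleteReductionMod J Q d fun t j => (L t j).eval a) :
    ∀ᶠ τ in cofiniteResidue A, IsCompleteReductionMod J Q d fun t j => (L t j).eval τ := by
  set I := ∏ j, J j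
  let N : Ideal A[X] := productsIdeal L * (I ^ (d - 1)).map C
  have map_I : I.map C = ∏ j, (J j).map C := map_prod (Ideal.mapHom C) J Finset.univ
  have hN : N ≤ (I ^ d).map C := calc
    N ≤ I.map C * (I ^ (d - 1)).map C := Ideal.mul_mono_left (map_I ▸ productsIdeal_le_prod hL)
    _ = (I * I ^ (d - 1)).map C := (Ideal.map_mul ..).symm
    _ ≤ (I ^ d).map C := Ideal.map_mono (mul_pow_sub_one_le I d)
  have map_N (τ : A) : N.map (evalRingHom τ) =
      productsIdeal (fun t j => (L t j).eval τ) * I ^ (d - 1) := by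
    rw [Ideal.map_mul, map_productsIdeal, map_evalRingHom_map_C]
    rfl
  filter_upwards [eventually_le_sup_map_evalRingHom hfg hN (map_N a ▸ ha.pow_le)] with τ hτ
  refine ⟨fun t j => ?_, map_N τ ▸ hτ⟩
  simpa only [map_evalRingHom_map_C, coe_evalRingHom] using
    Ideal.mem_map_of_mem (evalRingHom τ) (hL t j)

variable [Infinite (IsLocalRing.ResidueField A)]

theorem exists_forall_isCompleteReductionMod {σ : Type*} (S : Finset σ) (Q : σ → Ideal A)
    (hfg : ∀ k ∈ S, (Submodule.map (Q k).mkQ ((∏ j, J j) ^ d)).FG)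
    (hex : ∀ k ∈ S, ∃ l : κ → ι → A, IsCompleteReductionMod J (Q k) d l) :
    ∃ l : κ → ι → A, (∀ t j, l t j ∈ J j) ∧ ∀ k ∈ S, IsCompleteReductionMod J (Q k) d l := by
  classical
  induction S using Finset.induction_on with
  | empty => exact ⟨0, fun _ j => (J j).zero_mem, by simp⟩
  | insert k₀ S _ ih =>
    rw [Finset.forall_mem_insert] at hfg hex
    obtain ⟨l, hl_mem, hl⟩ := ih hfg.2 hex.2
    obtain ⟨l', hl'⟩ := hex.1
    let line (t : κ) (j : ι) : A[X] := C (l t j) + X * C (l' t j - l t j)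
    have line_mem (t j) : line t j ∈ (J j).map C :=
      add_mem (Ideal.mem_map_of_mem C (hl_mem t j))
        (Ideal.mul_mem_left _ _ (Ideal.mem_map_of_mem C (sub_mem (hl'.mem t j) (hl_mem t j))))
    have eval_zero_line : (fun t j => (line t j).eval 0) = l := by simp [line]
    have eval_one_line : (fun t j => (line t j).eval 1) = l' := by simp [line]
    have eventually_S := (Finset.eventually_all S).mpr fun k hk =>
      IsCompleteReductionMod.eventually_eval (hfg.2 k hk) line_mem (a := 0)
        (eval_zero_line ▸ hl k hk)
    have eventually_k₀ :=
      IsCompleteReductionMod.eventually_eval hfg.1 line_mem (a := 1) (eval_one_line ▸ hl')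
    obtain ⟨τ, hτ₀, hτ⟩ := (eventually_k₀.and eventually_S).exists
    exact ⟨_, hτ₀.mem, Finset.forall_mem_insert .. |>.mpr ⟨hτ₀, hτ⟩⟩

theorem exists_isCompleteReductionMod_succ_of_colon {Q : Ideal A}
    (hfg : (Submodule.map Q.mkQ ((∏ j, J j) ^ (d + 1))).FG)
    (hcolon_fg : ∀ m : ∀ j, J j,
      (Submodule.map (Submodule.colon Q {∏ j, (m j : A)}).mkQ ((∏ j, J j) ^ d)).FG)
    (hex : ∀ m : ∀ j, J j, ∃ l : κ → ι → A,
      IsCompleteReductionMod J (Submodule.colon Q {∏ j, (m j : A)}) d l) :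
    ∃ l : κ → ι → A, IsCompleteReductionMod J Q (d + 1) l := by
  obtain ⟨S, hS⟩ := exists_finset_pow_succ_le_sup_iSup hfg
  obtain ⟨l, hl_mem, hl⟩ := exists_forall_isCompleteReductionMod S
    (fun m : ∀ j, J j => Submodule.colon Q {∏ j, (m j : A)})
    (fun m _ => hcolon_fg m) (fun m _ => hex m)
  refine ⟨l, hl_mem, hS.trans (sup_le le_sup_left (iSup₂_le fun m hm => ?_))⟩
  exact (hl m hm).span_singleton_mul_pow_le (Ideal.prod_mem_prod fun j _ => (m j).2)

theorem exists_isCompleteReductionMod_of_relLength_lt (J : ι → Ideal A) (d p : ℕ) (Q : Ideal A)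
    (h : relLength Q ((∏ j, J j) ^ d) < ((d + p).choose d : ℕ)) :
    ∃ l : Fin p → ι → A, IsCompleteReductionMod J Q d l := by
  induction d generalizing p Q with
  | zero => exact ⟨0, .zero (le_of_relLength_lt_one (by simpa using h))⟩
  | succ d ihd =>
    induction p generalizing Q with
    | zero => exact ⟨0, .zero (le_of_relLength_lt_one (by simpa using h))⟩
    | succ p ihp =>
      by_cases hshort : ∃ m : ∀ j, J j,
          relLength (Q ⊔ Ideal.span {∏ j, (m j : A)} * (∏ j, J j) ^ d) ((∏ j, J j) ^ (d + 1)) <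
            ((d + 1 + p).choose (d + 1) : ℕ)
      · obtain ⟨m, hm⟩ := hshort
        obtain ⟨l, hl⟩ := ihp _ hm
        exact ⟨_, hl.cons fun j => (m j).2⟩
      · have colon_lt (m : ∀ j, J j) :
            relLength (Submodule.colon Q {∏ j, (m j : A)}) ((∏ j, J j) ^ d) <
              ((d + (p + 1)).choose d : ℕ) :=
          (relLength_colon_lt_or_relLength_sup_lt h
            (Ideal.prod_mem_prod fun j _ => (m j).2)).resolve_right fun hm => hshort ⟨m, hm⟩
        exact exists_isCompleteReductionMod_succ_of_colon
          (fg_map_mkQ_of_relLength_ne_top (ne_top_of_lt h))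
          (fun m => fg_map_mkQ_of_relLength_ne_top (ne_top_of_lt (colon_lt m)))
          (fun m => ihd (p + 1) _ (colon_lt m))

end LocalRing

end OCarroll

/-- **O'Carroll's theorem on complete reductions.**  Let `(A,m)` be a local ring with
infinite residue field, `I = I_1 ⋯ I_s` a product of ideals, and `i, p` positive
integers.  If `I^i` is finitely generated with minimal number of generators
`< C(i+p, i)`, then there are elements `h_t = l_{t,1}⋯l_{t,s}` with `l_{t,j} ∈ I_j`
such that `I^i = (h_1, …, h_p)·I^{i-1}`. -/
theorem eakin_sathaye_ocarroll
    {A : Type*} [CommRing A] [IsLocalRing A]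
    [Infinite (IsLocalRing.ResidueField A)]
    (s : ℕ) (J : Fin s → Ideal A) (I : Ideal A) (hI : I = ∏ j : Fin s, J j)
    (i p : ℕ) (hi : 0 < i) (hp : 0 < p)
    (hv : ∃ G : Finset A, Ideal.span (G : Set A) = I ^ i ∧ G.card < (i + p).choose i) :
    ∃ l : Fin p → Fin s → A, (∀ t j, l t j ∈ J j) ∧
      I ^ i = Ideal.span (Set.range fun t => ∏ j : Fin s, l t j) * I ^ (i - 1) := by
  subst hI
  obtain ⟨G, hG, hcard⟩ := hv
  have relLength_lt : OCarroll.relLength (IsLocalRing.maximalIdeal A • (∏ j, J j) ^ i)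
      ((∏ j, J j) ^ i) < ((i + p).choose i : ℕ) := by
    rw [← hG]
    exact (OCarroll.relLength_smul_span_le_card _ G).trans_lt (Nat.cast_lt.mpr hcard)
  obtain ⟨l, hl_mem, hl⟩ := OCarroll.exists_isCompleteReductionMod_of_relLength_lt J i p _
    relLength_lt
  refine ⟨l, hl_mem, le_antisymm ?_ ?_⟩
  · exact Submodule.le_of_le_smul_of_le_jacobson_bot ⟨G, hG⟩
      (IsLocalRing.maximalIdeal_le_jacobson _) (hl.trans (sup_comm _ _).le)
  · exact (Ideal.mul_mono_left (OCarroll.productsIdeal_le_prod hl_mem)).trans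
      (OCarroll.mul_pow_sub_one_le _ i)
end

section
/- Let (A,m) be a local ring whose residue field has characteristic 0 (in particular it is infinite), let J be an ideal of A, let b be a positive integer and set I = J^b, and let i and p be positive integers such that I^i is finitely generated and v(I^i) < C(i+p, i). Then there exist elements h_1,…,h_p, each of the form h_t = l_t^b with l_t ∈ J, such that I^i = (h_1,…,h_p)·I^{i−1}. -/
/-!
Write `I = J ^ b`. Nakayama's lemma replaces the number of generators of `I ^ i` by the length of
`I ^ i P`, where `P = A / m I ^ i`, and the inductive statement makes sense for every module `P`:
if `I ^ i P` has length less than `C(i + p, i)`, then `I ^ i P = (l₁ ^ b, …, l_p ^ b) I ^ (i - 1) P`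
for some `l_t ∈ J`. The induction follows Pascal's rule, comparing `I ^ i P` with its submodules
`K_x = x ^ b I ^ (i - 1) P` for `x ∈ J`.

* If some `K_x` has length at least `C(i + p - 1, i - 1)`, then the image of `I ^ i P` in the
  quotient by `K_x` has length less than `C(i + p - 1, i)`. Lifting the `p - 1` elements found
  there and adding `x` to them gives the claim.
* Otherwise the induction hypothesis for `i - 1` applies to `x ^ b P` for every `x`. The `b`-th
  powers generate `I` by polarization, so finitely many `x` matter, and a single tuple `l` serves
  them all: along a line through a tuple good for one `x`, the parameters giving a bad tuple are
  zeros modulo `m` of a determinant that is a nonzero polynomial modulo `m`, and an infinite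
  residue field leaves room to avoid finitely many such zero sets at once.
-/

open Finset Polynomial IsLocalRing
open scoped Nat

section Polarization

variable {ι R : Type*} [Fintype ι] [DecidableEq ι] [CommRing R]

lemma sum_prod_comp_bijective (x : ι → R) :
    ∑ f : ι → ι with f.Bijective, ∏ j, x (f j) = (Fintype.card ι)! * ∏ j, x j := by
  calc ∑ f : ι → ι with f.Bijective, ∏ j, x (f j)
      = ∑ f : {f : ι → ι // f.Bijective}, ∏ j, x (f.1 j) :=
        (sum_subtype _ (by simp) _)
    _ = ∑ σ : Equiv.Perm ι, ∏ j, x (σ j) :=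
        Equiv.sum_comp Equiv.bijectiveEquiv fun σ : Equiv.Perm ι ↦ ∏ j, x (σ j)
    _ = (Fintype.card ι)! * ∏ j, x j := by
        simp [Equiv.prod_comp, Fintype.card_perm]

theorem sum_neg_one_pow_mul_sum_compl_pow (x : ι → R) :
    ∑ t : Finset ι, (-1) ^ #t * (∑ j ∈ tᶜ, x j) ^ Fintype.card ι =
      (Fintype.card ι)! * ∏ j, x j := by
  have inf_avoiding (t : Finset ι) :
      (t.inf fun i ↦ Fintype.piFinset fun _ : ι ↦ ({i} : Finset ι)ᶜ) =
        Fintype.piFinset fun _ : ι ↦ tᶜ := by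
    ext f
    simp only [mem_inf, Fintype.mem_piFinset, mem_compl, mem_singleton]
    grind
  have inf_hitting :
      (univ.inf fun i ↦ (Fintype.piFinset fun _ : ι ↦ ({i} : Finset ι)ᶜ)ᶜ) =
        ({f | f.Bijective} : Finset (ι → ι)) := by
    ext f
    rw [mem_filter_univ, ← Finite.surjective_iff_bijective]
    simp [mem_inf, Function.Surjective]
  have key := inclusion_exclusion_sum_inf_compl univ
    (fun i ↦ Fintype.piFinset fun _ : ι ↦ ({i} : Finset ι)ᶜ) fun f ↦ ∏ j, x (f j)
  rw [inf_hitting, sum_prod_comp_bijective] at key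
  simp_rw [key, powerset_univ, inf_avoiding, ← prod_univ_sum, prod_const, card_univ, zsmul_eq_mul]
  simp

end Polarization

theorem pow_le_span_pow_of_isUnit_factorial {A : Type*} [CommRing A] (J : Ideal A) {b : ℕ}
    (hb : IsUnit ((b ! : ℕ) : A)) : J ^ b ≤ Ideal.span ((· ^ b) '' (J : Set A)) := by
  rw [Submodule.pow_eq_span_pow_set, Submodule.span_le]
  intro z hz
  obtain ⟨x, rfl⟩ := Set.mem_pow.1 hz
  rw [List.prod_ofFn]
  have polarization := sum_neg_one_pow_mul_sum_compl_pow fun j ↦ (x j : A)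
  rw [Fintype.card_fin] at polarization
  rw [SetLike.mem_coe, ← Ideal.unit_mul_mem_iff_mem _ hb, ← polarization]
  exact sum_mem fun t _ ↦ Ideal.mul_mem_left _ _ <|
    Ideal.subset_span ⟨_, sum_mem fun j _ ↦ (x j).2, rfl⟩

section Length

variable {R M : Type*} [Ring R] [AddCommGroup M] [Module R M]

lemma length_eq_length_add_length_map_mkQ {K N : Submodule R M} (hKN : K ≤ N) :
    Module.length R N = Module.length R K + Module.length R (N.map K.mkQ) := by
  refine Module.length_eq_add_of_exact (Submodule.inclusion hKN) (K.mkQ.submoduleMap N)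
    (Submodule.inclusion_injective hKN) (LinearMap.submoduleMap_surjective _ _) ?_
  rw [LinearMap.exact_iff, Submodule.range_inclusion]
  ext x
  simp [LinearMap.mem_ker, Subtype.ext_iff]

lemma length_map_mkQ_lt_choose {K N : Submodule R M} (hKN : K ≤ N) {i p : ℕ}
    (hN : Module.length R N < (i + 1 + (p + 1)).choose (i + 1))
    (hK : (i + (p + 1)).choose i ≤ Module.length R K) :
    Module.length R (N.map K.mkQ) < (i + 1 + p).choose (i + 1) := by
  have pascal : (i + 1 + (p + 1)).choose (i + 1) =
      (i + (p + 1)).choose i + (i + 1 + p).choose (i + 1) := by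
    rw [show i + 1 + (p + 1) = i + (p + 1) + 1 by ring, Nat.choose_succ_succ,
      show i + 1 + p = i + (p + 1) by ring]
  rw [length_eq_length_add_length_map_mkQ hKN, pascal, Nat.cast_add] at hN
  contrapose! hN
  exact add_le_add hK hN

lemma eq_bot_of_length_lt_one {N : Submodule R M} (h : Module.length R N < 1) : N = ⊥ := by
  rwa [Order.lt_one_iff, Module.length_eq_zero_iff, Submodule.subsingleton_iff_eq_bot] at h

lemma fg_of_length_lt_top {N : Submodule R M} (h : Module.length R N < ⊤) : N.FG := by
  have finite_length := Module.length_ne_top_iff.1 h.ne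
  rw [isFiniteLength_iff_isNoetherian_isArtinian] at finite_length
  have := finite_length.1
  exact Module.Finite.iff_fg.1 inferInstance

lemma length_sup_le (N P : Submodule R M) :
    Module.length R ↥(N ⊔ P) ≤ Module.length R N + Module.length R P := by
  have range_coprod : (N.subtype.coprod P.subtype).range = N ⊔ P := by
    rw [LinearMap.range_coprod, N.range_subtype, P.range_subtype]
  rw [← Module.length_prod, ← range_coprod]
  exact Module.length_le_of_surjective _ (LinearMap.surjective_rangeRestrict _)

lemma length_span_finset_le_card (s : Finset M)
    (hs : ∀ x ∈ s, Module.length R (R ∙ x) ≤ 1) :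
    Module.length R (Submodule.span R (s : Set M)) ≤ #s := by
  classical
  induction s using Finset.induction_on with
  | empty => rw [coe_empty, Submodule.span_empty, Module.length_bot]; exact zero_le
  | insert x s hx ih =>
    rw [coe_insert, Submodule.span_insert, card_insert_of_notMem hx, add_comm, Nat.cast_add,
      Nat.cast_one]
    exact (length_sup_le _ _).trans <| add_le_add (hs x (mem_insert_self x s))
      (ih fun y hy ↦ hs y (mem_insert_of_mem hy))

end Length

section LineOpen

variable {A V : Type*} [CommRing A] [IsLocalRing A] [AddCommGroup V] [Module A V]

variable (A) in
/-- A set `S` in a module over a local ring `A` is line-open if, on every line `s ↦ l + s • d`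
through a point `l ∈ S`, the parameters `s` that leave `S` lie in finitely many residue classes.
It stands in for Zariski openness on modules that need not be finitely generated. -/
def IsLineOpen (S : Set V) : Prop :=
  ∀ l ∈ S, ∀ d : V, (residue A '' {s | l + s • d ∉ S}).Finite

lemma IsLineOpen.univ : IsLineOpen A (Set.univ : Set V) := by
  simp [IsLineOpen]

lemma IsLineOpen.inter {S T : Set V} (hS : IsLineOpen A S) (hT : IsLineOpen A T) :
    IsLineOpen A (S ∩ T) := by
  intro l hl d
  refine ((hS l hl.1 d).union (hT l hl.2 d)).subset ?_
  rw [← Set.image_union]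
  exact Set.image_mono fun s hs ↦ not_and_or.1 hs

lemma IsLineOpen.nonempty_inter [Infinite (ResidueField A)] {S T : Set V}
    (hS : IsLineOpen A S) (hT : IsLineOpen A T) (hS_ne : S.Nonempty) (hT_ne : T.Nonempty) :
    (S ∩ T).Nonempty := by
  obtain ⟨x, hx⟩ := hS_ne
  obtain ⟨y, hy⟩ := hT_ne
  have finite_leaving_T := (hT y hy (x - y)).image (1 - ·)
  obtain ⟨r, hr⟩ := ((hS x hx (y - x)).union finite_leaving_T).infinite_compl.nonempty
  obtain ⟨s, rfl⟩ := residue_surjective r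
  refine ⟨x + s • (y - x), ?_, ?_⟩
  · by_contra leaves_S
    exact hr (.inl ⟨s, leaves_S, rfl⟩)
  · by_contra leaves_T
    have same_point : y + (1 - s) • (x - y) = x + s • (y - x) := by module
    rw [← same_point] at leaves_T
    exact hr (.inr ⟨residue A (1 - s), ⟨1 - s, leaves_T, rfl⟩, by simp⟩)

lemma IsLineOpen.nonempty_biInter [Infinite (ResidueField A)] {κ : Type*} (F : Finset κ)
    {S : κ → Set V} (hS : ∀ k ∈ F, IsLineOpen A (S k)) (hS_ne : ∀ k ∈ F, (S k).Nonempty) :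
    (⋂ k ∈ F, S k).Nonempty := by
  classical
  suffices IsLineOpen A (⋂ k ∈ F, S k) ∧ (⋂ k ∈ F, S k).Nonempty from this.2
  induction F using Finset.induction_on with
  | empty => simpa using IsLineOpen.univ
  | insert k F _ ih =>
    rw [forall_mem_insert] at hS hS_ne
    obtain ⟨open_F, nonempty_F⟩ := ih hS.2 hS_ne.2
    rw [set_biInter_insert]
    exact ⟨hS.1.inter open_F, hS.1.nonempty_inter open_F hS_ne.1 nonempty_F⟩

end LineOpen

lemma span_range_le_span_range_sum_smul {ι R M : Type*} [Fintype ι] [DecidableEq ι] [CommRing R]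
    [AddCommGroup M] [Module R M] {B : Matrix ι ι R} (hB : IsUnit B.det) (g : ι → M) :
    Submodule.span R (Set.range g) ≤
      Submodule.span R (Set.range fun k ↦ ∑ j, B k j • g j) := by
  rw [Submodule.span_le]
  rintro _ ⟨k, rfl⟩
  have recover : g k = ∑ l, B⁻¹ k l • ∑ j, B l j • g j := by
    simp_rw [smul_sum, smul_smul]
    rw [sum_comm]
    simp_rw [← sum_smul, ← Matrix.mul_apply, Matrix.nonsing_inv_mul B hB, Matrix.one_apply]
    simp
  rw [recover]
  exact sum_mem fun l _ ↦ Submodule.smul_mem _ _ (Submodule.subset_span ⟨l, rfl⟩)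

lemma exists_sum_eval_smul_eq_eval_smul {ι R M : Type*} [Fintype ι] [CommRing R]
    [AddCommGroup M] [Module R M] {g : ι → M} {q : R[X]} {y : M}
    (hq : ∀ n, q.coeff n • y ∈ Submodule.span R (Set.range g)) :
    ∃ P : ι → R[X], ∀ s, ∑ j, (P j).eval s • g j = q.eval s • y := by
  have hc n := (Submodule.mem_span_range_iff_exists_fun R).1 (hq n)
  choose c hc using hc
  refine ⟨fun j ↦ ∑ n ∈ range (q.natDegree + 1), monomial n (c n j), fun s ↦ ?_⟩
  calc ∑ j, (∑ n ∈ range (q.natDegree + 1), monomial n (c n j)).eval s • g j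
      = ∑ n ∈ range (q.natDegree + 1), s ^ n • ∑ j, c n j • g j := by
        simp_rw [eval_finsetSum, eval_monomial, sum_smul, smul_sum, smul_smul, mul_comm (s ^ _)]
        exact sum_comm
    _ = q.eval s • y := by
        simp_rw [hc, smul_smul, ← sum_smul, mul_comm (s ^ _), ← eval_eq_sum_range]

section LocalRing

variable {A M : Type*} [CommRing A] [IsLocalRing A] [AddCommGroup M] [Module A M]

lemma finite_residue_image_not_isUnit_eval {P : A[X]} {a : A} (ha : IsUnit (P.eval a)) :
    (residue A '' {s | ¬ IsUnit (P.eval s)}).Finite := by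
  have ne_zero : P.map (residue A) ≠ 0 := by
    intro h
    rw [← residue_ne_zero_iff_isUnit, ← eval_map_apply, h, eval_zero] at ha
    exact ha rfl
  refine (finite_setOfPred_isRoot ne_zero).subset ?_
  rintro _ ⟨s, hs, rfl⟩
  rwa [Set.mem_ofPred_eq, ← residue_ne_zero_iff_isUnit, not_not, ← eval_map_apply] at hs

lemma isUnit_natCast_of_charZero_residueField [CharZero (ResidueField A)] {n : ℕ} (hn : n ≠ 0) :
    IsUnit (n : A) := by
  rwa [← residue_ne_zero_iff_isUnit, map_natCast, Nat.cast_ne_zero]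

lemma length_span_singleton_le_one {x : M} (hx : ∀ a ∈ maximalIdeal A, a • x = 0) :
    Module.length A (A ∙ x) ≤ 1 := by
  have : IsSimpleModule A (A ⧸ maximalIdeal A) :=
    isSimpleModule_iff_isCoatom.2 (maximalIdeal.isMaximal A).out
  let f : A ⧸ maximalIdeal A →ₗ[A] M := (maximalIdeal A).liftQ (LinearMap.toSpanSingleton A M x) hx
  have range_f : f.range = A ∙ x :=
    (Submodule.range_liftQ _ _ _).trans (LinearMap.range_toSpanSingleton x)
  rw [← range_f, ← Module.length_eq_one A (A ⧸ maximalIdeal A)]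
  exact Module.length_le_of_surjective f.rangeRestrict f.surjective_rangeRestrict

lemma length_map_mkQ_span_le_card (G : Finset M) :
    Module.length A ((Submodule.span A (G : Set M)).map
      (maximalIdeal A • Submodule.span A (G : Set M)).mkQ) ≤ #G := by
  classical
  rw [Submodule.map_span, ← coe_image]
  refine (length_span_finset_le_card _ fun z hz ↦ ?_).trans (Nat.cast_le.2 card_image_le)
  obtain ⟨g, hg, rfl⟩ := mem_image.1 hz
  refine length_span_singleton_le_one fun a ha ↦ ?_
  rw [← map_smul, Submodule.mkQ_apply, Submodule.Quotient.mk_eq_zero]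
  exact Submodule.smul_mem_smul ha (Submodule.subset_span hg)

lemma finite_residue_image_not_le_span_of_finite {ι : Type*} [Finite ι] {q : ι → A[X]}
    {y : ι → M} {N : Submodule A M} (hq : ∀ k n, (q k).coeff n • y k ∈ N)
    (hN : N = Submodule.span A (Set.range fun k ↦ (q k).eval 0 • y k)) :
    (residue A '' {s | ¬ N ≤ Submodule.span A (Set.range fun k ↦ (q k).eval s • y k)}).Finite := by
  classical
  have := Fintype.ofFinite ι
  have hP k := exists_sum_eval_smul_eq_eval_smul (q := (q k).divX) (y := y k) fun n ↦ by
    rw [← hN, coeff_divX]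
    exact hq k (n + 1)
  choose P hP using hP
  let B : Matrix ι ι A[X] := 1 + (X : A[X]) • Matrix.of P
  have map_eval (s : A) : B.map (eval s) = 1 + s • Matrix.of fun k j ↦ (P k j).eval s := by
    ext k j
    by_cases hkj : k = j <;> simp [B, hkj]
  have eval_det (s : A) : B.det.eval s = (B.map (eval s)).det :=
    RingHom.map_det (evalRingHom s) B
  have isUnit_eval_det_zero : IsUnit (B.det.eval 0) := by
    simp [eval_det, map_eval]
  have curve (s : A) (k : ι) :
      (q k).eval s • y k = ∑ j, B.map (eval s) k j • (q j).eval 0 • y j := by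
    calc (q k).eval s • y k
        = (q k).eval 0 • y k + s • (q k).divX.eval s • y k := by
          nth_rewrite 1 [← divX_mul_X_add (q k)]
          rw [eval_add, eval_mul, eval_X, eval_C, coeff_zero_eq_eval_zero]
          module
      _ = ∑ j, B.map (eval s) k j • (q j).eval 0 • y j := by
          simp [-Matrix.map_apply, map_eval, Matrix.one_apply, add_smul, sum_add_distrib, mul_smul,
            ← smul_sum, hP]
  refine (finite_residue_image_not_isUnit_eval isUnit_eval_det_zero).subset <|
    Set.image_mono fun s hs hunit ↦ hs ?_
  rw [hN]
  simp_rw [curve s]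
  exact span_range_le_span_range_sum_smul (eval_det s ▸ hunit) _

lemma finite_residue_image_not_le_span {ι : Type*} {q : ι → A[X]} {y : ι → M}
    {N : Submodule A M} (hN_fg : N.FG) (hq : ∀ k n, (q k).coeff n • y k ∈ N)
    (hN : N ≤ Submodule.span A (Set.range fun k ↦ (q k).eval 0 • y k)) :
    (residue A '' {s | ¬ N ≤ Submodule.span A (Set.range fun k ↦ (q k).eval s • y k)}).Finite := by
  have span_eq : Submodule.span A (Set.range fun k ↦ (q k).eval 0 • y k) = N := by
    refine le_antisymm (Submodule.span_le.2 ?_) hN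
    rintro _ ⟨k, rfl⟩
    simpa only [coeff_zero_eq_eval_zero, SetLike.mem_coe] using hq k 0
  rw [← span_eq, Submodule.fg_span_iff_fg_span_finset_subset] at hN_fg
  obtain ⟨u, hu, hu_span⟩ := hN_fg
  choose e he using fun w : u ↦ hu w.2
  have span_subfamily : N = Submodule.span A (Set.range fun w ↦ (q (e w)).eval 0 • y (e w)) := by
    rw [← span_eq, hu_span]
    simp [he]
  refine (finite_residue_image_not_le_span_of_finite (fun w n ↦ hq (e w) n)
    span_subfamily).subset (Set.image_mono fun s hs hle ↦ hs (hle.trans ?_))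
  exact Submodule.span_mono (Set.range_comp_subset_range e fun k ↦ (q k).eval s • y k)

end LocalRing

section PowIdeal

variable {ι A M : Type*} [CommRing A] [AddCommGroup M] [Module A M] {J : Ideal A}

/-- The ideal generated by the `b`-th powers of a family of elements of `J`. The family takes
values in the subtype `J`, so that families form an `A`-module and line-openness applies. -/
def powIdeal (b : ℕ) (l : ι → J) : Ideal A :=
  Ideal.span (Set.range fun t ↦ (l t : A) ^ b)

lemma span_singleton_pow_le (b : ℕ) (x : J) : Ideal.span {(x : A) ^ b} ≤ J ^ b :=
  (Ideal.span_singleton_le_iff_mem _).2 (Ideal.pow_mem_pow x.2 b)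

lemma powIdeal_le (b : ℕ) (l : ι → J) : powIdeal b l ≤ J ^ b := by
  rw [powIdeal, Ideal.span_le]
  rintro _ ⟨t, rfl⟩
  exact Ideal.pow_mem_pow (l t).2 b

lemma powIdeal_cons (b : ℕ) {p : ℕ} (x : J) (l : Fin p → J) :
    powIdeal b (Fin.cons x l : Fin (p + 1) → J) = Ideal.span {(x : A) ^ b} ⊔ powIdeal b l := by
  have range_cons : (Set.range fun t ↦ ((Fin.cons x l : Fin (p + 1) → J) t : A) ^ b) =
      insert ((x : A) ^ b) (Set.range fun t ↦ (l t : A) ^ b) := by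
    rw [← Fin.range_cons]
    congr 1
    funext t
    cases t using Fin.cases <;> rfl
  rw [powIdeal, range_cons, Ideal.span_insert, powIdeal]

lemma powIdeal_smul_eq_span (b : ℕ) (l : ι → J) (Q : Submodule A M) :
    powIdeal b l • Q =
      Submodule.span A (Set.range fun k : ι × Q ↦ (l k.1 : A) ^ b • (k.2 : M)) := by
  nth_rewrite 1 [← Q.span_eq, powIdeal, Submodule.span_smul_span]
  congr 1
  ext z
  simp [Set.mem_smul]

lemma mul_pow_pred_le_pow (I : Ideal A) (i : ℕ) : I * I ^ (i - 1) ≤ I ^ i := by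
  cases i with
  | zero => simp
  | succ i => exact (pow_succ' I i).ge

lemma isLineOpen_setOf_le_powIdeal_smul [IsLocalRing A] (b : ℕ) {N Q : Submodule A M}
    (hN : N.FG) (hQ : J ^ b • Q ≤ N) : IsLineOpen A {l : ι → J | N ≤ powIdeal b l • Q} := by
  intro l hl d
  let q (k : ι × Q) : A[X] := (C (l k.1 : A) + X * C (d k.1 : A)) ^ b
  have eval_q (s : A) (k : ι × Q) : (q k).eval s = ((l + s • d) k.1 : J) ^ b := by
    simp [q, mul_comm s]
  have coeff_q_mem (k : ι × Q) (n : ℕ) : (q k).coeff n ∈ J ^ b := by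
    refine Ideal.mem_map_C_iff.1 ?_ n
    rw [Ideal.map_pow]
    exact Ideal.pow_mem_pow (add_mem (Ideal.mem_map_of_mem _ (l k.1).2)
      (Ideal.mul_mem_left _ _ (Ideal.mem_map_of_mem _ (d k.1).2))) b
  have powIdeal_line (s : A) : powIdeal b (l + s • d) • Q =
      Submodule.span A (Set.range fun k ↦ (q k).eval s • (k.2 : M)) := by
    simp_rw [eval_q, powIdeal_smul_eq_span]
  simp_rw [Set.mem_ofPred_eq, powIdeal_line]
  refine finite_residue_image_not_le_span hN
    (fun k n ↦ hQ (Submodule.smul_mem_smul (coeff_q_mem k n) k.2.2)) ?_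
  rw [← powIdeal_line, zero_smul, add_zero]
  exact hl

end PowIdeal

section Reduction

variable {A M : Type*} [CommRing A] [AddCommGroup M] [Module A M] {J : Ideal A} {b p : ℕ}

lemma le_powIdeal_cons_smul_of_map_mkQ_le {N Q : Submodule A M} (x : J) {l : Fin p → J}
    (h : N.map (Ideal.span {(x : A) ^ b} • Q).mkQ ≤
      powIdeal b l • Q.map (Ideal.span {(x : A) ^ b} • Q).mkQ) :
    N ≤ powIdeal b (Fin.cons x l : Fin (p + 1) → J) • Q := by
  rwa [powIdeal_cons, Submodule.sup_smul, ← Submodule.comap_map_mkQ, Submodule.map_smul'',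
    ← Submodule.map_le_iff_le_comap]

lemma exists_finset_pow_smul_le_iSup (hJ : J ^ b ≤ Ideal.span ((· ^ b) '' (J : Set A)))
    {Q : Submodule A M} (hQ : (J ^ b • Q).FG) :
    ∃ F : Finset J, J ^ b • Q ≤ ⨆ x ∈ F, Ideal.span {(x : A) ^ b} • Q := by
  refine CompleteLattice.IsCompactElement.exists_finset_of_le_iSup _
    ((Submodule.fg_iff_compact _).1 hQ) _ ?_
  rw [← Submodule.iSup_smul, ← Submodule.span_range_eq_iSup]
  rw [Set.image_eq_range] at hJ
  exact Submodule.smul_mono_left hJ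

lemma exists_le_powIdeal_smul_of_forall_span_pow_smul {ι : Type*} [IsLocalRing A]
    [Infinite (ResidueField A)] (hJ : J ^ b ≤ Ideal.span ((· ^ b) '' (J : Set A))) {i : ℕ}
    {P : Submodule A M} (hP : ((J ^ b) ^ (i + 1) • P).FG)
    (hP_fg : ∀ x : J, ((J ^ b) ^ i • Ideal.span {(x : A) ^ b} • P).FG)
    (h : ∀ x : J, ∃ l : ι → J, (J ^ b) ^ i • Ideal.span {(x : A) ^ b} • P ≤
      powIdeal b l • (J ^ b) ^ (i - 1) • Ideal.span {(x : A) ^ b} • P) :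
    ∃ l : ι → J, (J ^ b) ^ (i + 1) • P ≤ powIdeal b l • (J ^ b) ^ i • P := by
  rw [pow_succ', mul_smul] at hP ⊢
  obtain ⟨F, hF⟩ := exists_finset_pow_smul_le_iSup hJ hP
  have mul_pow_pred_smul_le (Q : Submodule A M) :
      J ^ b • (J ^ b) ^ (i - 1) • Q ≤ (J ^ b) ^ i • Q := by
    rw [← mul_smul]
    exact Submodule.smul_mono_left (mul_pow_pred_le_pow (J ^ b) i)
  obtain ⟨l, hl⟩ := IsLineOpen.nonempty_biInter F
    (fun x _ ↦ isLineOpen_setOf_le_powIdeal_smul b (hP_fg x) (mul_pow_pred_smul_le _))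
    (fun x _ ↦ h x)
  rw [Set.mem_iInter₂] at hl
  refine ⟨l, hF.trans (iSup₂_le fun x hx ↦ ?_)⟩
  calc Ideal.span {(x : A) ^ b} • (J ^ b) ^ i • P
      = (J ^ b) ^ i • Ideal.span {(x : A) ^ b} • P := smul_comm _ _ _
    _ ≤ powIdeal b l • (J ^ b) ^ (i - 1) • Ideal.span {(x : A) ^ b} • P := hl x hx
    _ = powIdeal b l • Ideal.span {(x : A) ^ b} • (J ^ b) ^ (i - 1) • P := by
        rw [smul_comm (Ideal.span _)]
    _ ≤ powIdeal b l • J ^ b • (J ^ b) ^ (i - 1) • P :=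
        Submodule.smul_mono le_rfl (Submodule.smul_mono_left (span_singleton_pow_le b x))
    _ ≤ powIdeal b l • (J ^ b) ^ i • P :=
        Submodule.smul_mono le_rfl (mul_pow_pred_smul_le P)

/-- At `i = 0` the truncated `i - 1` is harmless, as `P` then has length zero. -/
theorem exists_pow_smul_le_powIdeal_smul_of_length_lt_choose [IsLocalRing A]
    [Infinite (ResidueField A)] (hJ : J ^ b ≤ Ideal.span ((· ^ b) '' (J : Set A))) (i p : ℕ)
    (P : Submodule A M) (hP : Module.length A ↥((J ^ b) ^ i • P) < (i + p).choose i) :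
    ∃ l : Fin p → J, (J ^ b) ^ i • P ≤ powIdeal b l • (J ^ b) ^ (i - 1) • P := by
  induction i generalizing p M with
  | zero =>
    have bot := eq_bot_of_length_lt_one (hP.trans_eq (by simp))
    exact ⟨0, bot.trans_le bot_le⟩
  | succ i ih_i =>
    induction p generalizing M with
    | zero =>
      have bot := eq_bot_of_length_lt_one (hP.trans_eq (by simp))
      exact ⟨0, bot.trans_le bot_le⟩
    | succ p ih_p =>
      rw [Nat.add_sub_cancel] at ih_p ⊢
      have span_smul_le (x : J) :
          Ideal.span {(x : A) ^ b} • (J ^ b) ^ i • P ≤ (J ^ b) ^ (i + 1) • P := by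
        rw [pow_succ', mul_smul]
        exact Submodule.smul_mono_left (span_singleton_pow_le b x)
      by_cases small : ∀ x : J, Module.length A ↥((J ^ b) ^ i • Ideal.span {(x : A) ^ b} • P) <
          (i + (p + 1)).choose i
      · exact exists_le_powIdeal_smul_of_forall_span_pow_smul hJ
          (fg_of_length_lt_top (hP.trans_le le_top))
          (fun x ↦ fg_of_length_lt_top ((small x).trans_le le_top))
          fun x ↦ ih_i (p + 1) _ (small x)
      · push Not at small
        obtain ⟨x, hx⟩ := small
        rw [smul_comm] at hx
        have small_quotient := length_map_mkQ_lt_choose (span_smul_le x) hP hx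
        rw [Submodule.map_smul''] at small_quotient
        obtain ⟨l, hl⟩ := ih_p _ small_quotient
        refine ⟨Fin.cons x l, le_powIdeal_cons_smul_of_map_mkQ_le x ?_⟩
        simpa only [Submodule.map_smul''] using hl

end Reduction

theorem eakin_sathaye_powers_general {A M : Type*} [CommRing A] [IsLocalRing A]
    [Infinite (ResidueField A)] [AddCommGroup M] [Module A M] (J : Ideal A) (b : ℕ)
    (hJ : J ^ b ≤ Ideal.span ((· ^ b) '' (J : Set A))) (P : Submodule A M) (i p : ℕ)
    (hv : ∃ G : Finset M, Submodule.span A (G : Set M) = (J ^ b) ^ (i + 1) • P ∧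
      #G < (i + 1 + p).choose (i + 1)) :
    ∃ l : Fin p → A, (∀ t, l t ∈ J) ∧ (J ^ b) ^ (i + 1) • P =
      Ideal.span (Set.range fun t ↦ l t ^ b) • (J ^ b) ^ i • P := by
  obtain ⟨G, hG, hcard⟩ := hv
  have hlength := (length_map_mkQ_span_le_card (A := A) G).trans_lt (Nat.cast_lt.2 hcard)
  rw [hG, Submodule.map_smul''] at hlength
  obtain ⟨l, hl⟩ := exists_pow_smul_le_powIdeal_smul_of_length_lt_choose hJ (i + 1) p _ hlength
  refine ⟨fun t ↦ l t, fun t ↦ (l t).2, le_antisymm ?_ ?_⟩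
  · refine Submodule.le_of_le_smul_of_le_jacobson_bot ⟨G, hG⟩ (maximalIdeal_le_jacobson _) ?_
    rw [Nat.add_sub_cancel] at hl
    simp only [← Submodule.map_smul''] at hl
    rwa [Submodule.map_le_iff_le_comap, Submodule.comap_map_mkQ, sup_comm] at hl
  · rw [pow_succ', mul_smul]
    exact Submodule.smul_mono_left (powIdeal_le b l)

/-- **Eakin–Sathaye for powers (char 0 residue field).**  Let `(A,m)` be a local ring
whose residue field has characteristic `0`, `I = J^b` with `b > 0`, and `i, p` positive
integers.  If `I^i` is finitely generated with minimal number of generators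
`< C(i+p, i)`, then there are elements `h_t = l_t^b` with `l_t ∈ J` such that
`I^i = (h_1, …, h_p)·I^{i-1}`. -/
theorem eakin_sathaye_powers
    {A : Type*} [CommRing A] [IsLocalRing A]
    [CharZero (IsLocalRing.ResidueField A)]
    (J : Ideal A) (b : ℕ) (hb : 0 < b) (I : Ideal A) (hI : I = J ^ b)
    (i p : ℕ) (hi : 0 < i) (hp : 0 < p)
    (hv : ∃ G : Finset A, Ideal.span (G : Set A) = I ^ i ∧ G.card < (i + p).choose i) :
    ∃ l : Fin p → A, (∀ t, l t ∈ J) ∧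
      I ^ i = Ideal.span (Set.range fun t => l t ^ b) * I ^ (i - 1) := by
  obtain ⟨i, rfl⟩ := Nat.exists_eq_add_one.2 hi
  subst hI
  have : Infinite (ResidueField A) := Infinite.of_injective _ Nat.cast_injective
  have factorial_isUnit : IsUnit ((b ! : ℕ) : A) :=
    isUnit_natCast_of_charZero_residueField b.factorial_ne_zero
  simpa using eakin_sathaye_powers_general J b
    (pow_le_span_pow_of_isUnit_factorial J factorial_isUnit)
    (⊤ : Ideal A) i p (by simpa using hv)
end

section
/- Let (A,m) be a local ring whose residue field has characteristic 0 (in particular it is infinite), let I_1,…,I_s be ideals of A and set I = I_1·(I_1+I_2)⋯(I_1+⋯+I_s), and let i and p be positive integers such that I^i is finitely generated and v(I^i) < C(i+p, i). Then there exist elements h_1,…,h_p, each of the form h_t = l_{t,1}·(l_{t,1}+l_{t,2})⋯(l_{t,1}+⋯+l_{t,s}) with l_{t,j} ∈ I_j, such that I^i = (h_1,…,h_p)·I^{i−1}. -/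
/-!
Let `φ (l₁, …, lₛ) = l₁ (l₁ + l₂) ⋯ (l₁ + ⋯ + lₛ)`. Since `s!` is invertible, polarization shows
that the values of `φ` on `I₁ × ⋯ × Iₛ` generate `I`. The rest is the argument of Eakin and Sathaye,
by induction on the exponent `n + 1` and the number `r` of elements, with the number of generators
replaced by the length of `Iⁿ⁺¹` modulo an arbitrary ideal `Q`, required to be less than
`C(n + 1 + r, n + 1)`. For a value `x` of `φ`, this length is the sum of the lengths of `x Iⁿ`
modulo `Q` and of `Iⁿ⁺¹` modulo `Q + x Iⁿ`. By Pascal's rule, either some `x` makes the second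
summand small, and `x` together with the `r - 1` elements found modulo `Q + x Iⁿ` does the job, or
the first summand is small for every `x`. In the latter case the induction on `n`, applied modulo
`Q : x`, provides for each `x` elements `h₁, …, hᵣ` with `x Iⁿ ⊆ (h₁, …, hᵣ) x Iⁿ⁻¹ + Q`. This is an
open condition on `h₁, …, hᵣ`, so over an infinite residue field one choice serves the finitely many
`x` needed to generate `Iⁿ⁺¹` modulo `Q`. Nakayama's lemma then removes `Q = m Iⁿ⁺¹`.
-/

open Filter IsLocalRing Polynomial

namespace EakinSathaye

section RelLength

variable {A M M' : Type*} [CommRing A] [AddCommGroup M] [Module A M] [AddCommGroup M'] [Module A M']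

/-- The length of `(N + Q) / Q`, for submodules `N` and `Q` of the same module. -/
noncomputable def relLength (N Q : Submodule A M) : ℕ∞ :=
  Module.length A (N.map Q.mkQ)

lemma length_map_eq_relLength_ker (f : M →ₗ[A] M') (N : Submodule A M) :
    Module.length A (N.map f) = relLength N (LinearMap.ker f) := by
  have map_liftQ_map_mkQ :
      (N.map (LinearMap.ker f).mkQ).map ((LinearMap.ker f).liftQ f le_rfl) = N.map f := by
    rw [← Submodule.map_comp, Submodule.liftQ_mkQ]
  have liftQ_injective : Function.Injective ((LinearMap.ker f).liftQ f le_rfl) :=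
    LinearMap.ker_eq_bot.mp (Submodule.ker_liftQ_eq_bot _ _ _ le_rfl)
  rw [← map_liftQ_map_mkQ]
  exact (Submodule.equivMapOfInjective _ liftQ_injective _).length_eq.symm

lemma relLength_map (f : M →ₗ[A] M') (N : Submodule A M) (Q : Submodule A M') :
    relLength (N.map f) Q = relLength N (Q.comap f) := by
  rw [relLength, ← Submodule.map_comp, length_map_eq_relLength_ker, LinearMap.ker_comp,
    Submodule.ker_mkQ]

lemma length_eq_length_add_relLength {X N : Submodule A M} (hXN : X ≤ N) :
    Module.length A N = Module.length A X + relLength N X := by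
  refine Module.length_eq_add_of_exact (Submodule.inclusion hXN) (X.mkQ.submoduleMap N)
    (Submodule.inclusion_injective hXN) (X.mkQ.submoduleMap_surjective N) fun y => ?_
  rw [Set.mem_range, Subtype.ext_iff, LinearMap.submoduleMap_coe_apply, ZeroMemClass.coe_zero,
    Submodule.mkQ_apply, Submodule.Quotient.mk_eq_zero]
  exact ⟨fun hy => ⟨⟨y, hy⟩, rfl⟩, fun ⟨x, hx⟩ => hx ▸ x.2⟩

lemma relLength_eq_add {X N : Submodule A M} (hXN : X ≤ N) (Q : Submodule A M) :
    relLength N Q = relLength X Q + relLength N (Q ⊔ X) := by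
  rw [relLength, length_eq_length_add_relLength (Submodule.map_mono hXN), relLength_map,
    Submodule.comap_map_mkQ]
  rfl

lemma relLength_lt_one_iff {N Q : Submodule A M} : relLength N Q < 1 ↔ N ≤ Q := by
  rw [Order.lt_one_iff, relLength, Module.length_eq_zero_iff, Submodule.subsingleton_iff_eq_bot,
    ← le_bot_iff, Submodule.map_le_iff_le_comap, ← LinearMap.ker, Submodule.ker_mkQ]

lemma fg_map_mkQ_of_relLength_ne_top {N Q : Submodule A M} (h : relLength N Q ≠ ⊤) :
    (N.map Q.mkQ).FG := by
  have := (isFiniteLength_iff_isNoetherian_isArtinian.mp (Module.length_ne_top_iff.mp h)).1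
  exact Module.Finite.iff_fg.mp inferInstance

lemma exists_finset_le_iSup_sup_of_fg_map_mkQ {ι : Type*} {N Q : Submodule A M}
    {P : ι → Submodule A M} (hfg : (N.map Q.mkQ).FG) (hN : N ≤ ⨆ x, P x) :
    ∃ S : Finset ι, N ≤ (⨆ x ∈ S, P x) ⊔ Q := by
  have map_le : N.map Q.mkQ ≤ ⨆ x, (P x).map Q.mkQ :=
    (Submodule.map_mono hN).trans (Submodule.map_iSup _ _).le
  obtain ⟨S, hS⟩ := CompleteLattice.IsCompactElement.exists_finset_of_le_iSup _
    ((Submodule.fg_iff_compact _).mp hfg) _ map_le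
  refine ⟨S, ?_⟩
  simp_rw [← Submodule.map_iSup, Submodule.map_le_iff_le_comap, Submodule.comap_map_mkQ] at hS
  rwa [sup_comm]

lemma exists_fg_le_sup_of_fg_map_mkQ {N Q : Submodule A M} (hfg : (N.map Q.mkQ).FG) :
    ∃ N₀ ≤ N, N₀.FG ∧ N ≤ N₀ ⊔ Q := by
  obtain ⟨S, hS⟩ := exists_finset_le_iSup_sup_of_fg_map_mkQ (P := fun x : N => A ∙ (x : M)) hfg
    fun x hx => Submodule.mem_iSup_of_mem ⟨x, hx⟩ (Submodule.mem_span_singleton_self x)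
  refine ⟨⨆ x ∈ S, A ∙ (x : M), iSup₂_le fun x _ => ?_, ?_, hS⟩
  · exact (Submodule.span_singleton_le_iff_mem _ _).mpr x.2
  · exact Submodule.fg_biSup S _ fun x _ => Submodule.fg_span_singleton _

lemma relLength_maximalIdeal_smul [IsLocalRing A] {N : Submodule A M} (hN : N.FG) :
    relLength N (maximalIdeal A • N) = N.spanFinrank := by
  have : Module.Finite A N := Module.Finite.iff_fg.mpr hN
  have comap_subtype : (maximalIdeal A • N).comap N.subtype = maximalIdeal A • ⊤ := by
    have map_smul_top : (maximalIdeal A • (⊤ : Submodule A N)).map N.subtype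
        = maximalIdeal A • N := by rw [Submodule.map_smul'', N.map_subtype_top]
    rw [← map_smul_top, Submodule.comap_map_eq_of_injective N.subtype_injective]
  let := Ideal.Quotient.field (maximalIdeal A)
  calc relLength N (maximalIdeal A • N)
      = Module.length A (N ⧸ maximalIdeal A • (⊤ : Submodule A N)) := by
        conv_lhs => rw [← N.map_subtype_top]
        rw [relLength_map, N.map_subtype_top, comap_subtype, relLength, Submodule.map_top,
          Submodule.range_mkQ, Module.length_top]
    _ = Module.length (A ⧸ maximalIdeal A) (N ⧸ maximalIdeal A • (⊤ : Submodule A N)) :=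
        Module.length_eq_of_surjective Ideal.Quotient.mk_surjective
    _ = N.spanFinrank := by
        rw [IsLocalRing.spanFinrank_eq_finrank_quotient N hN, Module.length_eq_finrank]

end RelLength

section PolynomialOnLines

variable {A : Type*} [CommRing A]

/-- The restriction of `φ` to every line of `E` is a polynomial with coefficients in `I`. This is
all that the reduction argument needs to know about the parametrization `φ` of generators of `I`;
`E` need not be finitely generated, so `φ` itself need not be a polynomial map. -/
def IsPolynomialOnLines {E : Type*} [AddCommGroup E] [Module A E] (I : Ideal A) (φ : E → A) :
    Prop :=
  ∀ a b : E, ∃ f ∈ I.map C, ∀ c : A, φ (a + c • b) = f.eval c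

lemma map_evalRingHom_map_C (I : Ideal A) (c : A) : (I.map C).map (evalRingHom c) = I := by
  have : (evalRingHom c).comp C = RingHom.id A := RingHom.ext fun x => eval_C
  rw [Ideal.map_map, this, Ideal.map_id]

lemma C_eval_zero_mem_span_sup {I : Ideal A} {f : A[X]} (hf : f ∈ I.map C) :
    C (f.eval 0) ∈ Ideal.span {f} ⊔ Ideal.span {X} * I.map C := by
  have divX_mem : f.divX ∈ I.map C :=
    Ideal.mem_map_C_iff.mpr fun n => coeff_divX (p := f) ▸ Ideal.mem_map_C_iff.mp hf (n + 1)
  have C_eval_zero : C (f.eval 0) = f - X * f.divX := by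
    rw [eq_sub_iff_add_eq', ← coeff_zero_eq_eval_zero, X_mul_divX_add]
  rw [C_eval_zero]
  exact Submodule.sub_mem_sup (Ideal.mem_span_singleton_self f)
    (Ideal.mul_mem_mul (Ideal.mem_span_singleton_self X) divX_mem)

lemma map_C_le_span_sup_span_X_mul {ι : Type*} {I N N' Q : Ideal A} {f : ι → A[X]}
    (hf : ∀ t, f t ∈ I.map C) (hIN' : I * N' ≤ N)
    (h₀ : N ≤ Ideal.span (Set.range fun t => (f t).eval 0) * N' ⊔ Q) :
    N.map C ≤ Ideal.span (Set.range f) * N'.map C ⊔ Q.map C ⊔ Ideal.span {X} * N.map C := by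
  have span_le : (Ideal.span (Set.range fun t => (f t).eval 0)).map C
      ≤ Ideal.span (Set.range f) ⊔ Ideal.span {X} * I.map C := by
    rw [Ideal.map_span, Ideal.span_le]
    rintro _ ⟨_, ⟨t, rfl⟩, rfl⟩
    have singleton_le : Ideal.span {f t} ⊔ Ideal.span {X} * I.map C
        ≤ Ideal.span (Set.range f) ⊔ Ideal.span {X} * I.map C :=
      sup_le_sup_right (Ideal.span_mono (Set.singleton_subset_iff.mpr (Set.mem_range_self t))) _
    exact singleton_le (C_eval_zero_mem_span_sup (hf t))
  calc N.map C
      ≤ (Ideal.span (Set.range fun t => (f t).eval 0)).map C * N'.map C ⊔ Q.map C := by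
        rw [← Ideal.map_mul, ← Ideal.map_sup]
        exact Ideal.map_mono h₀
    _ ≤ (Ideal.span (Set.range f) ⊔ Ideal.span {X} * I.map C) * N'.map C ⊔ Q.map C := by
        gcongr
    _ = Ideal.span (Set.range f) * N'.map C ⊔ Q.map C ⊔ Ideal.span {X} * (I * N').map C := by
        rw [Ideal.sup_mul, mul_assoc, Ideal.map_mul, sup_right_comm]
    _ ≤ Ideal.span (Set.range f) * N'.map C ⊔ Q.map C ⊔ Ideal.span {X} * N.map C := by
        gcongr

-- Nakayama over `A[X]` with respect to `(X)`: a multiplier `r ≡ 1 mod X` makes the inclusion that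
-- holds at `X = 0` hold over `A[X]`, hence at every `X = c`.
lemma exists_eval_zero_eq_one_forall_eval_mul_mem {ι : Type*} {I N N' Q : Ideal A} {f : ι → A[X]}
    (hf : ∀ t, f t ∈ I.map C) (hIN' : I * N' ≤ N) (hfg : (Submodule.map Q.mkQ N).FG)
    (h₀ : N ≤ Ideal.span (Set.range fun t => (f t).eval 0) * N' ⊔ Q) :
    ∃ r : A[X], r.eval 0 = 1 ∧ ∀ c, ∀ x ∈ N,
      r.eval c * x ∈ Ideal.span (Set.range fun t => (f t).eval c) * N' ⊔ Q := by
  obtain ⟨N₀, hN₀, hN₀fg, hNN₀⟩ := exists_fg_le_sup_of_fg_map_mkQ hfg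
  set T : Ideal A[X] := Ideal.span (Set.range f) * N'.map C ⊔ Q.map C
  have map_Q_le : Q.map C ≤ T := le_sup_right
  have span_X_mul_le : Ideal.span {X} * N.map C ≤ T ⊔ Ideal.span {X} * Ideal.map C N₀ :=
    calc Ideal.span {X} * N.map C
        ≤ Ideal.span {X} * (Ideal.map C N₀ ⊔ Q.map C) := by
          rw [← Ideal.map_sup]
          exact Ideal.mul_mono_right (Ideal.map_mono hNN₀)
      _ = Ideal.span {X} * Ideal.map C N₀ ⊔ Ideal.span {X} * Q.map C := Ideal.mul_sup _ _ _
      _ ≤ T ⊔ Ideal.span {X} * Ideal.map C N₀ :=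
          sup_le le_sup_right (le_sup_of_le_left (Ideal.mul_le_right.trans map_Q_le))
  have le_sup : N.map C ≤ T ⊔ Ideal.span {X} * Ideal.map C N₀ :=
    (map_C_le_span_sup_span_X_mul hf hIN' h₀).trans (sup_le le_sup_left span_X_mul_le)
  obtain ⟨r, hr, hrT⟩ := Submodule.exists_sub_one_mem_and_smul_le_of_fg_of_le_sup
    (Ideal.FG.map hN₀fg C) (Ideal.map_mono hN₀) le_sup
  refine ⟨r, ?_, fun c x hx => ?_⟩
  · have := X_dvd_iff.mp (Ideal.mem_span_singleton.mp hr)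
    rw [coeff_zero_eq_eval_zero, eval_sub, eval_one] at this
    exact sub_eq_zero.mp this
  · have map_T : T.map (evalRingHom c)
        = Ideal.span (Set.range fun t => (f t).eval c) * N' ⊔ Q := by
      rw [Ideal.map_sup, Ideal.map_mul, map_evalRingHom_map_C, map_evalRingHom_map_C,
        Ideal.map_span, ← Set.range_comp]
      rfl
    have rC_mem : r * C x ∈ T :=
      hrT (Submodule.smul_mem_pointwise_smul _ r _ (Ideal.mem_map_of_mem C hx))
    simpa [map_T] using Ideal.mem_map_of_mem (evalRingHom c) rC_mem

end PolynomialOnLines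

section LineOpen

variable {A : Type*} [CommRing A] [IsLocalRing A]

variable (A) in
/-- The filter of sets of scalars containing all but finitely many residue classes modulo the
maximal ideal; a property holding eventually along it is one that holds for general scalars. -/
noncomputable def residueCofinite : Filter A :=
  cofinite.comap (residue A)

instance [Infinite (ResidueField A)] : (residueCofinite A).NeBot :=
  Filter.NeBot.comap_of_surj inferInstance residue_surjective

lemma eventually_isUnit_eval {f : A[X]} (hf : f.map (residue A) ≠ 0) :
    ∀ᶠ c in residueCofinite A, IsUnit (f.eval c) := by
  filter_upwards [preimage_mem_comap (finite_setOfPred_isRoot hf).compl_mem_cofinite] with c hc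
  rw [← residue_ne_zero_iff_isUnit, ← eval_map_apply]
  exact hc

lemma mem_map_C_of_eventually_eval_mem [Infinite (ResidueField A)] {Q : Ideal A} {f : A[X]}
    (hf : ∀ᶠ c in residueCofinite A, f.eval c ∈ Q) : f ∈ Q.map C := by
  induction hd : f.natDegree using Nat.strong_induction_on generalizing f with
  | _ d ih =>
    obtain ⟨a, ha⟩ := hf.exists
    obtain rfl | hd_pos := d.eq_zero_or_pos
    · rw [eq_C_of_natDegree_eq_zero hd] at ha ⊢
      exact Ideal.mem_map_of_mem C (by rwa [eval_C] at ha)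
    set g := f /ₘ (X - C a)
    have hfg : (X - C a) * g + C (f.eval a) = f := by
      rw [← modByMonic_X_sub_C_eq_C_eval, add_comm, modByMonic_add_div]
    have natDegree_g : g.natDegree = f.natDegree - 1 := by
      rw [natDegree_divByMonic _ (monic_X_sub_C a), natDegree_X_sub_C]
    have map_X_sub_C_ne_zero : (X - C a : A[X]).map (residue A) ≠ 0 := by
      simpa using X_sub_C_ne_zero (residue A a)
    have eventually_eval_g_mem : ∀ᶠ c in residueCofinite A, g.eval c ∈ Q := by
      filter_upwards [hf, eventually_isUnit_eval map_X_sub_C_ne_zero] with c hc hunit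
      rw [← hfg, eval_add, eval_mul, eval_C] at hc
      exact (Ideal.unit_mul_mem_iff_mem Q hunit).mp ((Ideal.add_mem_iff_left Q ha).mp hc)
    rw [← hfg]
    have g_mem : g ∈ Q.map C := ih g.natDegree (by lia) eventually_eval_g_mem rfl
    exact Ideal.add_mem _ (Ideal.mul_mem_left _ _ g_mem) (Ideal.mem_map_of_mem C ha)

/-- `U` is open along lines: a point of `U` moved along any line stays in `U` for general values of
the parameter. This replaces Zariski openness on a module `E` that need not be finitely
generated. -/
def IsLineOpen (A : Type*) [CommRing A] [IsLocalRing A] {E : Type*} [AddCommGroup E] [Module A E]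
    (U : Set E) : Prop :=
  ∀ a ∈ U, ∀ b : E, ∀ᶠ c in residueCofinite A, a + c • b ∈ U

variable {E : Type*} [AddCommGroup E] [Module A E]

lemma isLineOpen_biInter {ι : Type*} (S : Finset ι) {U : ι → Set E}
    (hU : ∀ x, IsLineOpen A (U x)) : IsLineOpen A (⋂ x ∈ S, U x) := by
  intro a ha b
  simp only [Set.mem_iInter] at ha ⊢
  exact (eventually_all_finset S).mpr fun x hx => hU x a (ha x hx) b

lemma tendsto_one_sub_residueCofinite :
    Tendsto (fun c : A => 1 - c) (residueCofinite A) (residueCofinite A) := by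
  have : residue A ∘ (fun c : A => 1 - c) = (fun x => 1 - x) ∘ residue A := by ext; simp
  rw [residueCofinite, tendsto_comap_iff, this]
  exact (sub_right_injective.tendsto_cofinite).comp tendsto_comap

lemma IsLineOpen.inter_nonempty [Infinite (ResidueField A)] {U V : Set E}
    (hU : IsLineOpen A U) (hV : IsLineOpen A V) (hU₀ : U.Nonempty) (hV₀ : V.Nonempty) :
    (U ∩ V).Nonempty := by
  obtain ⟨a, ha⟩ := hU₀
  obtain ⟨b, hb⟩ := hV₀
  obtain ⟨c, hcU, hcV⟩ := ((hU a ha (b - a)).and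
    (tendsto_one_sub_residueCofinite.eventually (hV b hb (a - b)))).exists
  have : b + (1 - c) • (a - b) = a + c • (b - a) := by module
  exact ⟨a + c • (b - a), hcU, this ▸ hcV⟩

lemma biInter_nonempty_of_isLineOpen [Infinite (ResidueField A)] {ι : Type*} (S : Finset ι)
    {U : ι → Set E} (hU : ∀ x, IsLineOpen A (U x)) (hU₀ : ∀ x, (U x).Nonempty) :
    (⋂ x ∈ S, U x).Nonempty := by
  classical
  induction S using Finset.induction_on with
  | empty => simp
  | insert x S _ ih =>
    rw [Finset.set_biInter_insert]
    exact (hU x).inter_nonempty (isLineOpen_biInter S hU) (hU₀ x) ih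

lemma isLineOpen_setOf_le_span_mul_sup {ι : Type*} {I N N' Q : Ideal A} {φ : E → A}
    (hφ : IsPolynomialOnLines I φ) (hIN' : I * N' ≤ N) (hfg : (Submodule.map Q.mkQ N).FG) :
    IsLineOpen A {l : ι → E | N ≤ Ideal.span (Set.range (φ ∘ l)) * N' ⊔ Q} := by
  intro a ha b
  choose f hfI hf using fun t => hφ (a t) (b t)
  have comp_line (c : A) : φ ∘ (a + c • b) = fun t => (f t).eval c := funext fun t => hf t c
  have h₀ : N ≤ Ideal.span (Set.range fun t => (f t).eval 0) * N' ⊔ Q := by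
    rw [← comp_line]
    simpa using ha
  obtain ⟨r, hr₀, hr⟩ := exists_eval_zero_eq_one_forall_eval_mul_mem hfI hIN' hfg h₀
  have map_ne_zero : r.map (residue A) ≠ 0 := by
    intro h
    have : (r.map (residue A)).eval (residue A 0) = 1 := by rw [eval_map_apply, hr₀, map_one]
    simp [h] at this
  filter_upwards [eventually_isUnit_eval map_ne_zero] with c hc x hx
  rw [comp_line]
  exact (Ideal.unit_mul_mem_iff_mem _ hc).mp (hr c x hx)

end LineOpen

section Reduction

variable {A : Type*} [CommRing A]

-- The truncated `0 - 1 = 0` is harmless here; it lets the induction on the exponent start at `0`.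
lemma mul_pow_sub_one_le (I : Ideal A) (n : ℕ) : I * I ^ (n - 1) ≤ I ^ n := by
  cases n with
  | zero => rw [pow_zero, Ideal.one_eq_top]; exact le_top
  | succ n => exact (pow_succ' I n).ge

lemma span_singleton_mul_eq_map_mulLeft (a : A) (N : Ideal A) :
    Ideal.span {a} * N = Submodule.map (LinearMap.mulLeft A a) N := by
  ext x
  exact Ideal.mem_span_singleton_mul

lemma relLength_span_singleton_mul (a : A) (N Q : Ideal A) :
    relLength (Ideal.span {a} * N) Q = relLength N (Submodule.comap (LinearMap.mulLeft A a) Q) := by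
  rw [span_singleton_mul_eq_map_mulLeft, relLength_map]

lemma span_singleton_mul_le_of_le_mul_sup_comap {a : A} {N N' K Q : Ideal A}
    (h : N ≤ K * N' ⊔ Submodule.comap (LinearMap.mulLeft A a) Q) :
    Ideal.span {a} * N ≤ K * (Ideal.span {a} * N') ⊔ Q := by
  have mul_comap_le : Ideal.span {a} * Submodule.comap (LinearMap.mulLeft A a) Q ≤ Q := by
    rw [span_singleton_mul_eq_map_mulLeft]
    exact Submodule.map_comap_le _ _
  calc Ideal.span {a} * N
      ≤ Ideal.span {a} * (K * N' ⊔ Submodule.comap (LinearMap.mulLeft A a) Q) :=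
        Ideal.mul_mono_right h
    _ = K * (Ideal.span {a} * N')
          ⊔ Ideal.span {a} * Submodule.comap (LinearMap.mulLeft A a) Q := by
        rw [Ideal.mul_sup, mul_left_comm]
    _ ≤ K * (Ideal.span {a} * N') ⊔ Q := sup_le_sup_left mul_comap_le _

lemma le_span_range_cons_mul_sup {r : ℕ} {a : A} {v : Fin r → A} {N N' Q : Ideal A}
    (h : N ≤ Ideal.span (Set.range v) * N' ⊔ (Q ⊔ Ideal.span {a} * N')) :
    N ≤ Ideal.span (Set.range (Fin.cons a v : Fin (r + 1) → A)) * N' ⊔ Q := by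
  rwa [Fin.range_cons, Ideal.span_insert, Ideal.sup_mul, sup_comm (Ideal.span {a} * N'), sup_assoc,
    sup_comm _ Q]

lemma exists_pow_succ_le_of_choose_le_relLength {E : Type*} {I Q : Ideal A} {φ : E → A} {n r : ℕ}
    {x : E} (hx : φ x ∈ I)
    (ih : ∀ Q' : Ideal A, relLength (I ^ (n + 1)) Q' < ((n + 1 + r).choose (n + 1) : ℕ) →
      ∃ l : Fin r → E, I ^ (n + 1) ≤ Ideal.span (Set.range (φ ∘ l)) * I ^ n ⊔ Q')
    (hlt : relLength (I ^ (n + 1)) Q < ((n + 1 + (r + 1)).choose (n + 1) : ℕ))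
    (hle : ((n + (r + 1)).choose n : ℕ) ≤ relLength (Ideal.span {φ x} * I ^ n) Q) :
    ∃ l : Fin (r + 1) → E, I ^ (n + 1) ≤ Ideal.span (Set.range (φ ∘ l)) * I ^ n ⊔ Q := by
  have span_mul_le : Ideal.span {φ x} * I ^ n ≤ I ^ (n + 1) := by
    rw [pow_succ']
    exact Ideal.mul_mono_left ((Ideal.span_singleton_le_iff_mem I).mpr hx)
  have pascal : (n + 1 + (r + 1)).choose (n + 1)
      = (n + (r + 1)).choose n + (n + 1 + r).choose (n + 1) := by
    rw [Nat.add_right_comm, Nat.choose_succ_succ', Nat.add_right_comm n 1 r, Nat.add_assoc n r 1]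
  have relLength_lt : relLength (I ^ (n + 1)) (Q ⊔ Ideal.span {φ x} * I ^ n)
      < ((n + 1 + r).choose (n + 1) : ℕ) := by
    rw [relLength_eq_add span_mul_le, pascal, Nat.cast_add] at hlt
    by_contra! hge
    exact hlt.not_ge (add_le_add hle hge)
  obtain ⟨l, hl⟩ := ih _ relLength_lt
  refine ⟨Fin.cons x l, ?_⟩
  rw [Fin.comp_cons]
  exact le_span_range_cons_mul_sup hl

variable [IsLocalRing A] [Infinite (ResidueField A)] {E : Type*} [AddCommGroup E] [Module A E]
  {I : Ideal A} {φ : E → A}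

lemma exists_le_span_mul_sup_of_forall_exists {ι κ : Type*} {N N' : κ → Ideal A} {P P' Q : Ideal A}
    (hφ : IsPolynomialOnLines I φ) (hIN' : ∀ x, I * N' x ≤ N x)
    (hNfg : ∀ x, (Submodule.map Q.mkQ (N x)).FG) (hPfg : (Submodule.map Q.mkQ P).FG)
    (hPN : P ≤ ⨆ x, N x) (hN'P' : ∀ x, N' x ≤ P')
    (h : ∀ x, ∃ l : ι → E, N x ≤ Ideal.span (Set.range (φ ∘ l)) * N' x ⊔ Q) :
    ∃ l : ι → E, P ≤ Ideal.span (Set.range (φ ∘ l)) * P' ⊔ Q := by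
  obtain ⟨S, hS⟩ := exists_finset_le_iSup_sup_of_fg_map_mkQ hPfg hPN
  obtain ⟨l, hl⟩ := biInter_nonempty_of_isLineOpen S
    (fun x => isLineOpen_setOf_le_span_mul_sup (ι := ι) hφ (hIN' x) (hNfg x)) h
  refine ⟨l, hS.trans (sup_le (iSup₂_le fun x hx => ?_) le_sup_right)⟩
  exact (Set.mem_iInter₂.mp hl x hx).trans
    (sup_le_sup_right (Ideal.mul_mono_right (hN'P' x)) _)

lemma exists_pow_succ_le_of_forall_relLength_lt {n r : ℕ} {Q : Ideal A}
    (hφ : IsPolynomialOnLines I φ) (hspan : Ideal.span (Set.range φ) = I)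
    (ih : ∀ Q' : Ideal A, relLength (I ^ n) Q' < ((n + r).choose n : ℕ) →
      ∃ l : Fin r → E, I ^ n ≤ Ideal.span (Set.range (φ ∘ l)) * I ^ (n - 1) ⊔ Q')
    (hfg : (Submodule.map Q.mkQ (I ^ (n + 1))).FG)
    (hx : ∀ x, relLength (Ideal.span {φ x} * I ^ n) Q < ((n + r).choose n : ℕ)) :
    ∃ l : Fin r → E, I ^ (n + 1) ≤ Ideal.span (Set.range (φ ∘ l)) * I ^ n ⊔ Q := by
  have φ_mem (x : E) : Ideal.span {φ x} ≤ I :=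
    hspan ▸ Ideal.span_mono (Set.singleton_subset_iff.mpr (Set.mem_range_self x))
  refine exists_le_span_mul_sup_of_forall_exists (N := fun x => Ideal.span {φ x} * I ^ n)
    (N' := fun x => Ideal.span {φ x} * I ^ (n - 1)) hφ (fun x => ?_)
    (fun x => fg_map_mkQ_of_relLength_ne_top (hx x).ne_top) hfg ?_ (fun x => ?_) fun x => ?_
  · rw [mul_left_comm]
    exact Ideal.mul_mono_right (mul_pow_sub_one_le I n)
  · rw [pow_succ', ← Submodule.iSup_mul, ← Submodule.span_range_eq_iSup]
    exact Ideal.mul_mono_left hspan.ge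
  · exact (Ideal.mul_mono_left (φ_mem x)).trans (mul_pow_sub_one_le I n)
  · obtain ⟨l, hl⟩ := ih _ (relLength_span_singleton_mul (φ x) _ Q ▸ hx x)
    exact ⟨l, span_singleton_mul_le_of_le_mul_sup_comap hl⟩

lemma exists_pow_le_span_mul_pow_sup (hφ : IsPolynomialOnLines I φ)
    (hspan : Ideal.span (Set.range φ) = I) (n r : ℕ) (Q : Ideal A)
    (hlt : relLength (I ^ n) Q < ((n + r).choose n : ℕ)) :
    ∃ l : Fin r → E, I ^ n ≤ Ideal.span (Set.range (φ ∘ l)) * I ^ (n - 1) ⊔ Q := by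
  have mem (x : E) : φ x ∈ I := hspan ▸ Ideal.subset_span (Set.mem_range_self x)
  induction n generalizing r Q with
  | zero =>
    exact ⟨0, (relLength_lt_one_iff.mp (by simpa using hlt)).trans le_sup_right⟩
  | succ n ihn =>
    induction r generalizing Q with
    | zero =>
      exact ⟨0, (relLength_lt_one_iff.mp (by simpa using hlt)).trans le_sup_right⟩
    | succ r ihr =>
      by_cases hx : ∀ x, relLength (Ideal.span {φ x} * I ^ n) Q < ((n + (r + 1)).choose n : ℕ)
      · exact exists_pow_succ_le_of_forall_relLength_lt hφ hspan (ihn (r + 1))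
          (fg_map_mkQ_of_relLength_ne_top hlt.ne_top) hx
      · push Not at hx
        obtain ⟨x, hx⟩ := hx
        exact exists_pow_succ_le_of_choose_le_relLength (mem x) ihr hlt hx

end Reduction

section NestedSumProd

/-- The product `f₀ (f₀ + f₁) ⋯ (f₀ + ⋯ + fₛ₋₁)`, for elements of a ring as well as for ideals. -/
def nestedSumProd {R : Type*} [CommSemiring R] {s : ℕ} (f : Fin s → R) : R :=
  ∏ j, ∑ k ∈ Finset.Iic j, f k

lemma map_nestedSumProd {R S : Type*} [CommSemiring R] [CommSemiring S] (g : R →+* S) {s : ℕ}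
    (f : Fin s → R) : g (nestedSumProd f) = nestedSumProd fun k => g (f k) := by
  simp only [nestedSumProd, map_prod, map_sum]

lemma nestedSumProd_succ {R : Type*} [CommSemiring R] {n : ℕ} (f : Fin (n + 1) → R) :
    nestedSumProd f = nestedSumProd (fun k => f k.castSucc) * ∑ k, f k := by
  have Iic_last : Finset.Iic (Fin.last n) = Finset.univ := Finset.Iic_top
  simp only [nestedSumProd, Fin.prod_univ_castSucc, Fin.sum_Iic_castSucc, Iic_last]

variable {A : Type*} [CommRing A]

lemma nestedSumProd_mem {s : ℕ} {J : Fin s → Ideal A} {l : Fin s → A} (hl : ∀ k, l k ∈ J k) :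
    nestedSumProd l ∈ nestedSumProd J := by
  refine Ideal.prod_mem_prod fun j _ => Ideal.sum_mem _ fun k hk => ?_
  rw [Ideal.sum_eq_sup]
  exact Finset.le_sup (f := J) hk (hl k)

lemma isPolynomialOnLines_nestedSumProd {s : ℕ} (J : Fin s → Ideal A) :
    IsPolynomialOnLines (nestedSumProd J) fun l : ∀ k, J k => nestedSumProd fun k => (l k : A) := by
  refine fun a b => ⟨nestedSumProd fun k => C (a k : A) + C (b k : A) * X, ?_, fun c => ?_⟩
  · rw [← Ideal.mapHom_apply, map_nestedSumProd]
    exact nestedSumProd_mem fun k => Ideal.add_mem _ (Ideal.mem_map_of_mem C (a k).2)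
      (Ideal.mul_mem_right X _ (Ideal.mem_map_of_mem C (b k).2))
  · rw [← coe_evalRingHom, map_nestedSumProd]
    simp [mul_comm c]

lemma add_pow_succ_le (K J : Ideal A) (m : ℕ) :
    (K + J) ^ (m + 1) ≤ J * (K + J) ^ m + K ^ (m + 1) := by
  induction m with
  | zero => simp [add_comm]
  | succ m ih =>
    calc (K + J) ^ (m + 1 + 1)
        = J * (K + J) ^ (m + 1) + K * (K + J) ^ (m + 1) := by ring
      _ ≤ J * (K + J) ^ (m + 1) + K * (J * (K + J) ^ m + K ^ (m + 1)) := by gcongr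
      _ = J * ((K + J) ^ (m + 1) + K * (K + J) ^ m) + K ^ (m + 1 + 1) := by ring
      _ ≤ J * ((K + J) ^ (m + 1) + (K + J) * (K + J) ^ m) + K ^ (m + 1 + 1) := by
        gcongr
        exact le_sup_left
      _ = J * (K + J) ^ (m + 1) + K ^ (m + 1 + 1) := by
        rw [← pow_succ', Submodule.add_eq_sup _ ((K + J) ^ (m + 1)), sup_idem]

lemma isUnit_natCast_factorial_of_le {m n : ℕ} (hmn : m ≤ n) (h : IsUnit (n.factorial : A)) :
    IsUnit (m.factorial : A) :=
  isUnit_of_dvd_unit (Nat.cast_dvd_cast (Nat.factorial_dvd_factorial hmn)) h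

variable [IsLocalRing A] [Infinite (ResidueField A)]

-- Over an infinite residue field the coefficients of a polynomial lie in any ideal containing its
-- values; the element here is the coefficient of `c`, up to the unit `m + 1`.
lemma mul_pow_mul_mem_of_forall_mul_pow_succ_mem {W : Ideal A} {a y z : A} {m : ℕ}
    (hm : IsUnit ((m + 1 : ℕ) : A)) (h : ∀ c : A, a * (y + c * z) ^ (m + 1) ∈ W) :
    a * y ^ m * z ∈ W := by
  let f : A[X] := C a * (C y + X * C z) ^ (m + 1)
  have f_mem : f ∈ W.map C :=
    mem_map_C_of_eventually_eval_mem (.of_forall fun c => by simpa [f, mul_comm z c] using h c)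
  have coeff_one : f.coeff 1 = ((m + 1 : ℕ) : A) * (a * y ^ m * z) := by
    have derivative_eval_zero : f.derivative.eval 0 = ((m + 1 : ℕ) : A) * (a * y ^ m * z) := by
      simp only [f, derivative_pow_succ, derivative_add, derivative_C, derivative_mul,
        derivative_X, eval_mul, eval_C, eval_pow, eval_add, eval_X, eval_one, eval_zero]
      push_cast
      ring
    rw [← derivative_eval_zero, ← coeff_zero_eq_eval_zero, coeff_derivative]
    simp
  exact (Ideal.unit_mul_mem_iff_mem W hm).mp (coeff_one ▸ Ideal.mem_map_C_iff.mp f_mem 1)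

lemma mul_add_pow_le_span_range_mul_add_pow {Λ : Type*} {a y : Λ → A} {P K J : Ideal A} {m : ℕ}
    (hm : IsUnit (m.factorial : A))
    (h : ∀ m' ≤ m, P * K ^ m' ≤ Ideal.span (Set.range fun t => a t * y t ^ m')) :
    P * (K + J) ^ m ≤
      Ideal.span (Set.range fun x : Λ × J => a x.1 * (y x.1 + (x.2 : A)) ^ m) := by
  have span_range_le (m : ℕ) : Ideal.span (Set.range fun t => a t * y t ^ m) ≤
      Ideal.span (Set.range fun x : Λ × J => a x.1 * (y x.1 + (x.2 : A)) ^ m) := by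
    refine Ideal.span_mono ?_
    rintro _ ⟨t, rfl⟩
    exact ⟨(t, 0), by simp⟩
  induction m with
  | zero => simpa using (h 0 le_rfl).trans (span_range_le 0)
  | succ m ih =>
    have mul_pow_le := ih (isUnit_natCast_factorial_of_le m.le_succ hm)
      fun m' hm' => h m' (hm'.trans m.le_succ)
    set W := Ideal.span (Set.range fun x : Λ × J => a x.1 * (y x.1 + (x.2 : A)) ^ (m + 1))
    have mul_le : P * (K + J) ^ m * J ≤ W := by
      refine (Ideal.mul_mono mul_pow_le (Ideal.span_eq J).ge).trans ?_
      rw [Ideal.span_mul_span', Ideal.span_le]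
      rintro _ ⟨_, ⟨⟨t, x⟩, rfl⟩, z, hz, rfl⟩
      refine mul_pow_mul_mem_of_forall_mul_pow_succ_mem
        (isUnit_of_dvd_unit (Nat.cast_dvd_cast (Nat.dvd_factorial m.succ_pos le_rfl)) hm) ?_
      refine fun c => Ideal.subset_span ⟨(t, x + c • ⟨z, hz⟩), ?_⟩
      simp [add_assoc]
    calc P * (K + J) ^ (m + 1)
        ≤ P * (J * (K + J) ^ m + K ^ (m + 1)) := Ideal.mul_mono_right (add_pow_succ_le K J m)
      _ = P * (K + J) ^ m * J + P * K ^ (m + 1) := by ring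
      _ ≤ W := sup_le mul_le ((h _ le_rfl).trans (span_range_le _))

lemma nestedSumProd_mul_sum_pow_le {n : ℕ} (J : Fin n → Ideal A) (e : ℕ)
    (hn : IsUnit ((n + e).factorial : A)) :
    nestedSumProd J * (∑ k, J k) ^ e ≤ Ideal.span (Set.range fun l : ∀ k, J k =>
      nestedSumProd (fun k => (l k : A)) * (∑ k, (l k : A)) ^ e) := by
  induction n generalizing e with
  | zero => simp [nestedSumProd, ← Ideal.span_singleton_pow]
  | succ n ih =>
    have hle := mul_add_pow_le_span_range_mul_add_pow (J := J (Fin.last n)) (m := e + 1)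
      (isUnit_natCast_factorial_of_le (by lia) hn)
      fun m hm => ih (fun k => J k.castSucc) m (isUnit_natCast_factorial_of_le (by lia) hn)
    rw [nestedSumProd_succ, Fin.sum_univ_castSucc, mul_assoc, ← pow_succ']
    refine hle.trans (Ideal.span_mono ?_)
    rintro _ ⟨⟨l, x⟩, rfl⟩
    refine ⟨Fin.snoc (α := fun k => J k) l x, ?_⟩
    simp [nestedSumProd_succ, Fin.sum_univ_castSucc, mul_assoc, ← pow_succ']

lemma span_range_nestedSumProd {s : ℕ} (J : Fin s → Ideal A) (hs : IsUnit (s.factorial : A)) :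
    Ideal.span (Set.range fun l : ∀ k, J k => nestedSumProd fun k => (l k : A))
      = nestedSumProd J := by
  refine le_antisymm (Ideal.span_le.mpr ?_) ?_
  · rintro _ ⟨l, rfl⟩
    exact nestedSumProd_mem fun k => (l k).2
  · simpa using nestedSumProd_mul_sum_pow_le J 0 hs

end NestedSumProd

end EakinSathaye

open EakinSathaye in
theorem eakin_sathaye_nested_sums_general {A : Type*} [CommRing A] [IsLocalRing A]
    [Infinite (ResidueField A)] {s : ℕ} (hs : IsUnit (s.factorial : A)) (J : Fin s → Ideal A)
    (i p : ℕ) (hfg : (nestedSumProd J ^ i).FG)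
    (hv : (nestedSumProd J ^ i).spanFinrank < (i + p).choose i) :
    ∃ l : Fin p → Fin s → A, (∀ t j, l t j ∈ J j) ∧
      nestedSumProd J ^ i
        = Ideal.span (Set.range fun t => nestedSumProd (l t)) * nestedSumProd J ^ (i - 1) := by
  have relLength_lt : relLength (nestedSumProd J ^ i) (maximalIdeal A • nestedSumProd J ^ i)
      < ((i + p).choose i : ℕ) := by
    rw [relLength_maximalIdeal_smul hfg]
    exact_mod_cast hv
  obtain ⟨l, hl⟩ := exists_pow_le_span_mul_pow_sup (isPolynomialOnLines_nestedSumProd J)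
    (span_range_nestedSumProd J hs) i p _ relLength_lt
  refine ⟨fun t j => l t j, fun t j => (l t j).2, le_antisymm ?_ ?_⟩
  · exact Submodule.le_of_le_smul_of_le_jacobson_bot hfg (maximalIdeal_le_jacobson ⊥) hl
  · have span_le : Ideal.span (Set.range fun t => nestedSumProd fun j => (l t j : A))
        ≤ nestedSumProd J := by
      rw [Ideal.span_le]
      rintro _ ⟨t, rfl⟩
      exact nestedSumProd_mem fun j => (l t j).2
    exact (Ideal.mul_mono_left span_le).trans (mul_pow_sub_one_le _ i)

/-- **Eakin–Sathaye for joint-type reductions (char 0 residue field).**  Let `(A,m)` be a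
local ring whose residue field has characteristic `0`, let
`I = I_1·(I_1+I_2)⋯(I_1+⋯+I_s)`, and `i, p` positive integers.  If `I^i` is finitely
generated with minimal number of generators `< C(i+p, i)`, then there are elements
`h_t = l_{t,1}·(l_{t,1}+l_{t,2})⋯(l_{t,1}+⋯+l_{t,s})` with `l_{t,j} ∈ I_j` such that
`I^i = (h_1, …, h_p)·I^{i-1}`. -/
theorem eakin_sathaye_nested_sums
    {A : Type*} [CommRing A] [IsLocalRing A]
    [CharZero (IsLocalRing.ResidueField A)]
    (s : ℕ) (J : Fin s → Ideal A) (I : Ideal A)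
    (hI : I = ∏ j : Fin s, ∑ k ∈ Finset.Iic j, J k)
    (i p : ℕ) (hi : 0 < i) (hp : 0 < p)
    (hv : ∃ G : Finset A, Ideal.span (G : Set A) = I ^ i ∧ G.card < (i + p).choose i) :
    ∃ l : Fin p → Fin s → A, (∀ t j, l t j ∈ J j) ∧
      I ^ i = Ideal.span
          (Set.range fun t => ∏ j : Fin s, ∑ k ∈ Finset.Iic j, l t k) * I ^ (i - 1) := by
  have : Infinite (ResidueField A) := CharZero.infinite _
  have isUnit_factorial : IsUnit (s.factorial : A) := by
    rw [← residue_ne_zero_iff_isUnit, map_natCast, Nat.cast_ne_zero]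
    exact s.factorial_ne_zero
  obtain ⟨G, hG, hcard⟩ := hv
  have spanFinrank_le : (I ^ i).spanFinrank ≤ G.card := by
    simpa [← hG] using Submodule.spanFinrank_span_le_ncard_of_finite (R := A) G.finite_toSet
  subst hI
  exact eakin_sathaye_nested_sums_general isUnit_factorial J i p ⟨G, hG⟩
    (spanFinrank_le.trans_lt hcard)
end
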